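/- For every N ≥ 1 and every n ∈ ℕ, the following are equivalent: (1) there exists an ℝ-linear map f : ℝⁿ → M(N,ℂ) such that f(v) is Hermitian and f(v)² = ‖v‖² I_N for all v ∈ ℝⁿ; (2) there exists an ℝ-linear map f : ℝⁿ → M(N,ℂ) such that every f(v) is Hermitian and f(v) is invertible for every nonzero v; (3) n ≤ 2·ord₂(N) + 1. (Entry 𝔤 = 𝔤𝔩(N,ℂ) of the Hurwitz–Radon value theorem.) -/

import Mathlib

open Matrix
/-! Part 1 -/
open UnitAddTorus in
noncomputable def HR.ev (ι : Type) [Fintype ι] :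
    AddMonoidAlgebra ℂ (ι → ℤ) →ₐ[ℂ] C(UnitAddTorus ι, ℂ) :=
  AddMonoidAlgebra.lift ℂ _ _
    { toFun := fun m => mFourier m.toAdd
      map_one' := by simp [mFourier_zero]
      map_mul' := fun a b => by ext x; simp [mFourier_add] }

namespace HR
open UnitAddTorus Filter Topology MeasureTheory

variable {ι : Type} [Fintype ι]

abbrev LP (ι : Type) := AddMonoidAlgebra ℂ (ι → ℤ)

lemma ev_single (m : ι → ℤ) (c : ℂ) : ev ι (AddMonoidAlgebra.single m c) = c • mFourier m := by
  simp [ev]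

lemma ev_apply (a : LP ι) : ev ι a = ∑ m ∈ a.coeff.support, a.coeff m • mFourier m := by
  simp [ev, AddMonoidAlgebra.lift_apply, Finsupp.sum]

noncomputable def l1 (a : LP ι) : ℝ := ∑ m ∈ a.coeff.support, ‖a.coeff m‖

@[reducible] noncomputable def msU : MeasureSpace UnitAddCircle := ⟨AddCircle.haarAddCircle⟩

attribute [local instance] msU

lemma probU : IsProbabilityMeasure (volume : Measure UnitAddCircle) :=
  inferInstanceAs (IsProbabilityMeasure AddCircle.haarAddCircle)

lemma haarU : Measure.IsAddHaarMeasure (volume : Measure UnitAddCircle) :=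
  inferInstanceAs (Measure.IsAddHaarMeasure AddCircle.haarAddCircle)

attribute [local instance] probU haarU

lemma integral_mFourier (m : ι → ℤ) :
    ∫ x : UnitAddTorus ι, mFourier m x = if m = 0 then 1 else 0 := by
  have h := (orthonormal_iff_ite.mp (orthonormal_mFourier (d := ι))) 0 m
  simp only [ContinuousMap.inner_toLp, ← mFourier_neg, ← mFourier_add] at h
  simp only [neg_zero, add_zero] at h
  refine Eq.trans ?_ (h.trans (by simp [eq_comm]))
  rfl

lemma coeff_eq (a : LP ι) (m : ι → ℤ) :
    a.coeff m = ∫ x : UnitAddTorus ι, mFourier (-m) x * ev ι a x := by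
  classical
  rw [ev_apply]
  simp only [ContinuousMap.coe_sum, Finset.sum_apply, ContinuousMap.coe_smul, Pi.smul_apply,
    Finset.mul_sum, smul_eq_mul]
  rw [integral_finsetSum]
  · have : ∀ i : ι → ℤ, ∫ x : UnitAddTorus ι, mFourier (-m) x * (a.coeff i * mFourier i x)
        = if i = m then a.coeff i else 0 := by
      intro i
      have : ∀ x : UnitAddTorus ι, mFourier (-m) x * (a.coeff i * mFourier i x)
          = a.coeff i * mFourier (-m + i) x := by
        intro x; rw [mFourier_add]; ring
      simp_rw [this]
      rw [integral_const_mul, integral_mFourier]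
      have : -m + i = 0 ↔ i = m := by rw [neg_add_eq_zero, eq_comm]
      simp [this]
    simp_rw [this]
    by_cases h : m ∈ a.coeff.support
    · rw [Finset.sum_ite_eq' ]; simp [h]
    · rw [Finset.sum_ite_eq' ]; simp only [h, if_false]; simpa using h
  · intro i _
    apply Continuous.integrable_of_hasCompactSupport
    · fun_prop
    · exact HasCompactSupport.of_compactSpace _

lemma coeff_le (a : LP ι) (m : ι → ℤ) : ‖a.coeff m‖ ≤ ‖ev ι a‖ := by
  rw [coeff_eq]
  refine (norm_integral_le_of_norm_le_const (C := ‖ev ι a‖) ?_).trans (by simp [measureReal_def])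
  refine Eventually.of_forall fun x => ?_
  rw [norm_mul]
  have h1 : ‖mFourier (-m) x‖ ≤ 1 := by
    exact (ContinuousMap.norm_coe_le_norm (mFourier (-m)) x).trans mFourier_norm.le
  have h2 := ContinuousMap.norm_coe_le_norm (ev ι a) x
  nlinarith [norm_nonneg (ev ι a x), norm_nonneg (mFourier (-m) x)]

noncomputable def box (ι : Type) [Fintype ι] [DecidableEq ι] (L : ℕ) : Finset (ι → ℤ) :=
  Fintype.piFinset fun _ => Finset.Icc (-(L : ℤ)) L

lemma exists_box [DecidableEq ι] (a : LP ι) : ∃ L, a.coeff.support ⊆ box ι L := by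
  refine ⟨∑ m ∈ a.coeff.support, ∑ i, (m i).natAbs, fun m hm => ?_⟩
  simp only [box, Fintype.mem_piFinset, Finset.mem_Icc]
  intro i
  have h1 : (m i).natAbs ≤ ∑ i, (m i).natAbs :=
    Finset.single_le_sum (f := fun i => (m i).natAbs) (fun _ _ => Nat.zero_le _) (Finset.mem_univ i)
  have h2 := Finset.single_le_sum (f := fun m : ι → ℤ => ∑ i, (m i).natAbs)
    (fun _ _ => Nat.zero_le _) hm
  omega

lemma support_pow [DecidableEq ι] (a : LP ι) (L : ℕ) (h : a.coeff.support ⊆ box ι L) (n : ℕ) :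
    (a ^ n).coeff.support ⊆ box ι (n * L) := by
  classical
  induction n with
  | zero =>
    rw [pow_zero]
    refine (AddMonoidAlgebra.support_coeff_one_subset).trans ?_
    intro m hm
    simp only [Finset.mem_zero] at hm
    subst hm
    simp only [box, Fintype.mem_piFinset]
    intro i
    simp
  | succ n ih =>
    rw [pow_succ]
    refine (AddMonoidAlgebra.support_coeff_mul_subset _ _).trans ?_
    intro m hm
    rw [Finset.mem_add] at hm
    obtain ⟨x, hx, y, hy, rfl⟩ := hm
    have hx := ih hx
    have hy := h hy
    simp only [box, Fintype.mem_piFinset, Finset.mem_Icc, Pi.add_apply] at *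
    intro i
    have := hx i
    have := hy i
    push_cast at *
    constructor <;> nlinarith

lemma wiener (q : LP ι) (hq : ∀ x, ev ι q x ≠ 0) (ε : ℝ) (hε : 0 < ε) :
    ∃ h : LP ι, l1 (h * q - 1) < ε := by
  classical
  let g : C(UnitAddTorus ι, ℂ) := ⟨fun x => (ev ι q x)⁻¹, (ev ι q).continuous.inv₀ hq⟩
  have hg : g ∈ (mFourierSubalgebra ι).topologicalClosure := by
    rw [mFourierSubalgebra_closure_eq_top]; trivial
  have hδ : 0 < 1 / (2 * (‖ev ι q‖ + 1)) := by positivity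
  obtain ⟨b, hb, hb'⟩ := Metric.mem_closure_iff.mp hg _ hδ
  have : ∃ h : LP ι, ev ι h = b := by
    have hb2 : b ∈ Submodule.span ℂ (Set.range (mFourier (d := ι))) := by
      rw [← mFourierSubalgebra_coe]; exact hb
    have hle : Submodule.span ℂ (Set.range (mFourier (d := ι))) ≤
        LinearMap.range (ev ι).toLinearMap := by
      rw [Submodule.span_le]
      rintro _ ⟨m, rfl⟩
      exact ⟨AddMonoidAlgebra.single m 1, by simp [ev_single]⟩
    obtain ⟨h, hh⟩ := hle hb2
    exact ⟨h, hh⟩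
  obtain ⟨h, rfl⟩ := this
  set r := 1 - h * q with hr
  have hrn : ‖ev ι r‖ ≤ 1 / 2 := by
    rw [ContinuousMap.norm_le _ (by norm_num)]
    intro x
    have : ev ι r x = (g x - ev ι h x) * ev ι q x := by
      simp [hr, g, sub_mul, hq x]
    rw [this, norm_mul]
    have h1 : ‖g x - ev ι h x‖ ≤ 1 / (2 * (‖ev ι q‖ + 1)) := by
      rw [← dist_eq_norm]
      exact (ContinuousMap.dist_apply_le_dist x).trans hb'.le
    have h2 := ContinuousMap.norm_coe_le_norm (ev ι q) x
    have h3 : (0:ℝ) < ‖ev ι q‖ + 1 := by positivity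
    calc ‖g x - ev ι h x‖ * ‖ev ι q x‖ ≤ 1 / (2 * (‖ev ι q‖ + 1)) * (‖ev ι q‖ + 1) := by
          gcongr; linarith
      _ = 1 / 2 := by field_simp
  obtain ⟨L, hL⟩ := exists_box r
  have hbound : ∀ n, l1 (r ^ n) ≤ (2 * (n * L : ℕ) + 1) ^ (Fintype.card ι) * (1 / 2 : ℝ) ^ n := by
    intro n
    have hs := support_pow r L hL n
    calc l1 (r ^ n) ≤ ∑ m ∈ (r ^ n).coeff.support, (1 / 2 : ℝ) ^ n := by
          refine Finset.sum_le_sum fun m _ => (coeff_le _ m).trans ?_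
          rw [map_pow]
          exact (norm_pow_le _ n).trans (by gcongr)
      _ = ((r ^ n).coeff.support.card : ℝ) * (1 / 2 : ℝ) ^ n := by simp
      _ ≤ _ := by
          gcongr
          refine (Nat.cast_le.mpr (Finset.card_le_card hs)).trans ?_
          simp only [box, Fintype.card_piFinset, Int.card_Icc, Finset.prod_const, Finset.card_univ]
          have : ((((n * L : ℕ) : ℤ) + 1 - -((n * L : ℕ) : ℤ)).toNat) = 2 * (n * L) + 1 := by omega
          rw [this]; push_cast; exact le_refl _
  have hlim : Tendsto (fun n : ℕ => (2 * (n * L : ℕ) + 1 : ℝ) ^ (Fintype.card ι) * (1 / 2 : ℝ) ^ n)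
      atTop (𝓝 0) := by
    have h0 := tendsto_pow_const_mul_const_pow_of_abs_lt_one (Fintype.card ι) (r := (1/2 : ℝ))
      (by rw [abs_of_pos] <;> norm_num)
    have h1 := h0.const_mul ((2 * L + 1 : ℝ) ^ Fintype.card ι)
    rw [mul_zero] at h1
    refine squeeze_zero' (Eventually.of_forall fun n => by positivity) ?_ h1
    filter_upwards [eventually_ge_atTop 1] with n hn
    rw [← mul_assoc, ← mul_pow]
    gcongr
    have : (1:ℝ) ≤ n := by exact_mod_cast hn
    push_cast
    nlinarith
  obtain ⟨n, hn⟩ := (hlim.eventually (gt_mem_nhds hε)).exists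
  refine ⟨h * ∑ j ∈ Finset.range n, r ^ j, ?_⟩
  have : h * (∑ j ∈ Finset.range n, r ^ j) * q - 1 = - r ^ n := by
    have hg := mul_neg_geom_sum r n
    have : h * q = 1 - r := by rw [hr]; ring
    calc _ = (h * q) * (∑ j ∈ Finset.range n, r ^ j) - 1 := by ring
      _ = _ := by rw [this, hg]; ring
  rw [this]
  have : l1 (- r ^ n) = l1 (r ^ n) := by simp [l1]
  rw [this]
  exact (hbound n).trans_lt hn

end HR
/-! Part 2 -/
namespace HR
set_option linter.unusedSectionVars false
open UnitAddTorus Filter Topology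

noncomputable def lin {ι : Type} {V : Type} [AddCommGroup V] [Module ℂ V] (g : (ι → ℤ) → V) :
    LP ι →ₗ[ℂ] V :=
  (Finsupp.linearCombination ℂ g).comp (AddMonoidAlgebra.coeffLinearEquiv ℂ).toLinearMap

lemma lin_single {ι : Type} {V : Type} [AddCommGroup V] [Module ℂ V] (g : (ι → ℤ) → V)
    (m : ι → ℤ) (c : ℂ) : lin g (AddMonoidAlgebra.single m c) = c • g m := by
  exact Finsupp.linearCombination_single ℂ c m

lemma lin_apply {ι : Type} {V : Type} [AddCommGroup V] [Module ℂ V] (g : (ι → ℤ) → V)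
    (a : LP ι) : lin g a = ∑ m ∈ a.coeff.support, a.coeff m • g m := by
  simp only [lin, LinearMap.comp_apply, Finsupp.linearCombination_apply, Finsupp.sum]
  rfl

/-- unimodular phase -/
noncomputable def zt (M : ℕ) (c : ℤ) : ℂ := Complex.exp (Real.pi * Complex.I * c / M)

lemma zt_add (M : ℕ) (c d : ℤ) : zt M (c + d) = zt M c * zt M d := by
  rw [zt, zt, zt, ← Complex.exp_add]; congr 1; push_cast; ring

lemma zt_zero (M : ℕ) : zt M 0 = 1 := by simp [zt]

lemma zt_norm (M : ℕ) (c : ℤ) : ‖zt M c‖ = 1 := by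
  have : (Real.pi * Complex.I * c / M : ℂ) = ((Real.pi * c / M : ℝ) : ℂ) * Complex.I := by
    push_cast; ring
  rw [zt, this, Complex.norm_exp_ofReal_mul_I]

lemma zt_conj (M : ℕ) (c : ℤ) : star (zt M c) = zt M (-c) := by
  rw [zt, zt]
  change (starRingEnd ℂ) _ = _
  rw [← Complex.exp_conj]; congr 1; simp

lemma zt_two (M : ℕ) [NeZero M] (c : ℤ) : zt M (2 * c) = ZMod.stdAddChar (c : ZMod M) := by
  rw [ZMod.stdAddChar_coe, zt]; congr 1; push_cast; ring

lemma zt_tendsto (c : ℤ) : Tendsto (fun M : ℕ => zt M c) atTop (𝓝 1) := by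
  have h : Tendsto (fun M : ℕ => (Real.pi * Complex.I * c / M : ℂ)) atTop (𝓝 0) :=
    tendsto_const_div_atTop_nhds_zero_nat _
  have := (Complex.continuous_exp.tendsto 0).comp h
  simpa [zt, Function.comp_def] using this

abbrev X (k M : ℕ) := Fin k → ZMod M
abbrev I2 (k : ℕ) := Fin k ⊕ Fin k

variable {k : ℕ}

/-- position shift -/
def sh (M : ℕ) (m : I2 k → ℤ) : X k M := fun j => (m (Sum.inl j) : ZMod M)

def dotz (m m' : I2 k → ℤ) : ℤ := ∑ j, m (Sum.inl j) * m' (Sum.inr j)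

noncomputable def ch (M : ℕ) [NeZero M] (m : I2 k → ℤ) (x : X k M) : ℂ :=
  ZMod.stdAddChar (∑ j, (m (Sum.inr j) : ZMod M) * x j)

noncomputable def Wm (M : ℕ) [NeZero M] (m : I2 k → ℤ) : Matrix (X k M) (X k M) ℂ :=
  Matrix.of fun x y => if y = x + sh M m then zt M (dotz m m) * ch M m x else 0

section
variable (M : ℕ) [NeZero M]

lemma sh_add (m m' : I2 k → ℤ) : sh M (m + m') = sh M m + sh M m' := by
  ext j; simp [sh]
lemma sh_neg (m : I2 k → ℤ) : sh M (-m) = - sh M m := by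
  ext j; simp [sh]

lemma ch_add_left (m m' : I2 k → ℤ) (x : X k M) : ch M (m + m') x = ch M m x * ch M m' x := by
  rw [ch, ch, ch, ← AddChar.map_add_eq_mul, ← Finset.sum_add_distrib]
  congr 1; refine Finset.sum_congr rfl fun j _ => ?_; simp; ring
lemma ch_add_right (m : I2 k → ℤ) (x y : X k M) : ch M m (x + y) = ch M m x * ch M m y := by
  rw [ch, ch, ch, ← AddChar.map_add_eq_mul, ← Finset.sum_add_distrib]
  congr 1; refine Finset.sum_congr rfl fun j _ => ?_; simp; ring
lemma ch_sh (m m' : I2 k → ℤ) : ch M m' (sh M m) = zt M (2 * dotz m m') := by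
  rw [zt_two, ch, dotz]; congr 1; push_cast
  refine Finset.sum_congr rfl fun j _ => ?_; simp [sh]; ring
lemma ch_norm (m : I2 k → ℤ) (x : X k M) : ‖ch M m x‖ = 1 := by
  exact Circle.norm_coe _
lemma ch_neg_neg (m : I2 k → ℤ) (x : X k M) : ch M (-m) x = ch M m (-x) := by
  simp [ch]
lemma ch_conj (m : I2 k → ℤ) (x : X k M) : star (ch M m x) = ch M (-m) x := by
  have h : ch M (-m) x * ch M m x = 1 := by
    rw [← ch_add_left]; simp [ch]
  have h2 : star (ch M m x) * ch M m x = 1 := by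
    have := Complex.conj_mul' (ch M m x)
    rw [ch_norm] at this; simpa using this
  have h3 : ch M m x ≠ 0 := by intro h0; simp [h0] at h
  exact mul_right_cancel₀ h3 (h2.trans h.symm)

lemma dotz_add (m m' : I2 k → ℤ) :
    dotz (m + m') (m + m') = dotz m m + dotz m' m' + dotz m m' + dotz m' m := by
  simp only [dotz, ← Finset.sum_add_distrib]
  refine Finset.sum_congr rfl fun j _ => ?_; simp; ring

lemma Wm_mul (m m' : I2 k → ℤ) :
    Wm M m * Wm M m' = zt M (dotz m m' - dotz m' m) • Wm M (m + m') := by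
  ext x y
  rw [Matrix.mul_apply, Finset.sum_eq_single (x + sh M m)]
  · simp only [Wm, Matrix.of_apply, Matrix.smul_apply, smul_eq_mul, if_true, sh_add, add_assoc]
    by_cases h : y = x + (sh M m + sh M m')
    · simp only [h, if_true]
      rw [ch_add_right, ch_sh, ch_add_left, dotz_add]
      have : 2 * dotz m m' = (dotz m m' - dotz m' m) + dotz m m' + dotz m' m := by ring
      rw [this]; simp only [zt_add]; ring
    · simp [h]
  · intro z _ hz
    simp [Wm, hz]
  · simp

lemma Wm_zero : Wm M (0 : I2 k → ℤ) = 1 := by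
  ext x y
  have : sh M (0 : I2 k → ℤ) = 0 := by ext; simp [sh]
  by_cases h : y = x
  · subst h; simp [Wm, this, dotz, zt_zero, ch]
  · simp [Wm, this, h, Matrix.one_apply_ne' h]

lemma Wm_neg_neg (m : I2 k → ℤ) (x y : X k M) : Wm M m (-x) (-y) = Wm M (-m) x y := by
  have h : (-y = -x + sh M m) ↔ (y = x + sh M (-m)) := by
    rw [sh_neg, neg_eq_iff_eq_neg]; simp [add_comm]
  have hd : dotz (-m) (-m) = dotz m m := by simp [dotz]
  simp [Wm, h, hd, ch_neg_neg]

lemma Wm_star (m : I2 k → ℤ) (x y : X k M) : star (Wm M m y x) = Wm M (-m) x y := by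
  have h : (x = y + sh M m) ↔ (y = x + sh M (-m)) := by
    rw [sh_neg, ← sub_eq_add_neg, eq_sub_iff_add_eq, eq_comm]
  have hd : dotz (-m) (-m) = dotz m m := by simp [dotz]
  simp only [Wm, Matrix.of_apply, hd]
  by_cases hh : x = y + sh M m
  · rw [if_pos hh, if_pos (h.mp hh), star_mul', zt_conj, ch_conj, hh, ch_add_right,
      ch_neg_neg M m (sh M m), ← sh_neg, ch_sh]
    have : 2 * dotz (-m) m = - dotz m m + - dotz m m := by simp [dotz]; ring
    rw [this, zt_add]
    have h1 : zt M (dotz m m) * zt M (-dotz m m) = 1 := by rw [← zt_add]; simp [zt_zero]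
    calc _ = zt M (-dotz m m) * ch M (-m) y * 1 := by ring
      _ = _ := by rw [← h1]; ring
  · rw [if_neg hh, if_neg (fun h' => hh (h.mpr h'))]; simp

end

attribute [local instance] Matrix.linftyOpNormedAddCommGroup Matrix.linftyOpNormedSpace
  Matrix.linftyOpNormedRing Matrix.linftyOpNormedAlgebra

lemma Wm_norm (M : ℕ) [NeZero M] (m : I2 k → ℤ) : ‖Wm M m‖ ≤ 1 := by
  rw [Matrix.linfty_opNorm_def]
  have : ((1 : NNReal) : ℝ) = 1 := rfl
  rw [← this, NNReal.coe_le_coe]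
  refine Finset.sup_le fun x _ => ?_
  rw [Finset.sum_eq_single (x + sh M m)]
  · rw [← NNReal.coe_le_coe]
    simp [Wm, zt_norm, ch_norm]
  · intro y _ hy; simp [Wm, hy]
  · simp

noncomputable def Op (M : ℕ) [NeZero M] : LP (I2 k) →ₗ[ℂ] Matrix (X k M) (X k M) ℂ := lin (Wm M)

lemma Op_norm (M : ℕ) [NeZero M] (a : LP (I2 k)) : ‖Op M a‖ ≤ l1 a := by
  rw [Op, lin_apply, l1]
  refine (norm_sum_le _ _).trans (Finset.sum_le_sum fun m _ => ?_)
  rw [norm_smul]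
  exact mul_le_of_le_one_right (norm_nonneg _) (Wm_norm M m)

lemma Op_one (M : ℕ) [NeZero M] : Op M (1 : LP (I2 k)) = 1 := by
  rw [Op, AddMonoidAlgebra.one_def, lin_single, Wm_zero, one_smul]

lemma Op_mul (a b : LP (I2 k)) : ∀ ε > 0, ∀ᶠ M in atTop, ∀ [NeZero M],
    ‖Op M (a * b) - Op M a * Op M b‖ ≤ ε := by
  induction a using AddMonoidAlgebra.induction_linear with
  | zero => intro ε hε; refine Eventually.of_forall fun M _ => ?_; simp [hε.le]
  | add a a' ha ha' =>
    intro ε hε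
    filter_upwards [ha _ (half_pos hε), ha' _ (half_pos hε)] with M h1 h2 _
    have : Op M ((a + a') * b) - Op M (a + a') * Op M b =
      (Op M (a * b) - Op M a * Op M b) + (Op M (a' * b) - Op M a' * Op M b) := by
      simp only [map_add, add_mul]; abel
    rw [this]
    exact (norm_add_le _ _).trans (by linarith [h1, h2])
  | single m c =>
    induction b using AddMonoidAlgebra.induction_linear with
    | zero => intro ε hε; refine Eventually.of_forall fun M _ => ?_; simp [hε.le]
    | add a a' ha ha' =>
      intro ε hε
      filter_upwards [ha _ (half_pos hε), ha' _ (half_pos hε)] with M h1 h2 _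
      have : ∀ b, Op M (b * (a + a')) - Op M b * Op M (a + a') =
        (Op M (b * a) - Op M b * Op M a) + (Op M (b * a') - Op M b * Op M a') := by
        intro b
        simp only [map_add, mul_add]; abel
      rw [this]
      exact (norm_add_le _ _).trans (by linarith [h1, h2])
    | single m' c' =>
      intro ε hε
      have h := (((zt_tendsto (dotz m m' - dotz m' m)).const_sub 1).norm.const_mul (‖c‖ * ‖c'‖))
      rw [sub_self, norm_zero, mul_zero] at h
      filter_upwards [h.eventually (gt_mem_nhds hε)] with M hM _
      rw [AddMonoidAlgebra.single_mul_single, Op, lin_single, lin_single, lin_single,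
        smul_mul_smul_comm, Wm_mul, ← smul_sub]
      have : Wm M (m + m') - zt M (dotz m m' - dotz m' m) • Wm M (m + m') =
        (1 - zt M (dotz m m' - dotz m' m)) • Wm M (m + m') := by rw [sub_smul, one_smul]
      rw [this, norm_smul, norm_smul, norm_mul]
      refine le_trans ?_ hM.le
      have h1 := Wm_norm M (m + m')
      have h2 := norm_nonneg (1 - zt M (dotz m m' - dotz m' m))
      gcongr
      exact mul_le_of_le_one_right h2 h1

end HR
/-! Part 3 -/
namespace HR
set_option linter.unusedSectionVars false
open UnitAddTorus Filter Topology

attribute [local instance] Matrix.linftyOpNormedAddCommGroup Matrix.linftyOpNormedSpace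
  Matrix.linftyOpNormedRing Matrix.linftyOpNormedAlgebra

variable {k : ℕ} {J : Type} [Fintype J] [DecidableEq J]

noncomputable def evz {ι : Type} [Fintype ι] (z : UnitAddTorus ι) : LP ι →ₐ[ℂ] ℂ :=
  (ContinuousMap.evalAlgHom ℂ ℂ z).comp (ev ι)

lemma evz_apply {ι : Type} [Fintype ι] (z : UnitAddTorus ι) (a : LP ι) : evz z a = ev ι a z := rfl

noncomputable def OpM (M : ℕ) [NeZero M] (T : Matrix J J (LP (I2 k))) :
    Matrix (J × X k M) (J × X k M) ℂ :=
  Matrix.of fun p q => Op M (T p.1 q.1) p.2 q.2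

lemma OpM_mulVec (M : ℕ) [NeZero M] (T : Matrix J J (LP (I2 k))) (u : J × X k M → ℂ)
    (i : J) : (fun x => (OpM M T *ᵥ u) (i, x)) = ∑ j, Op M (T i j) *ᵥ (fun x => u (j, x)) := by
  ext x
  simp only [Matrix.mulVec, dotProduct, OpM, Matrix.of_apply, Fintype.sum_prod_type,
    Finset.sum_apply]

lemma norm_slice (M : ℕ) [NeZero M] (u : J × X k M → ℂ) (i : J) : ‖fun x => u (i, x)‖ ≤ ‖u‖ :=
  (pi_norm_le_iff_of_nonneg (norm_nonneg _)).mpr fun x => norm_le_pi_norm u (i, x)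

lemma norm_of_slice (M : ℕ) [NeZero M] (u : J × X k M → ℂ) (C : ℝ) (hC : 0 ≤ C)
    (h : ∀ i, ‖fun x => u (i, x)‖ ≤ C) : ‖u‖ ≤ C :=
  (pi_norm_le_iff_of_nonneg hC).mpr fun p => (norm_le_pi_norm (fun x => u (p.1, x)) p.2).trans (h p.1)

lemma l1_nonneg {ι : Type} [Fintype ι] (a : LP ι) : 0 ≤ l1 a :=
  Finset.sum_nonneg fun _ _ => norm_nonneg _

lemma OpM_bound (T : Matrix J J (LP (I2 k))) : ∃ C : ℝ, 0 ≤ C ∧ ∀ (M : ℕ) [NeZero M],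
    ∀ u : J × X k M → ℂ, ‖OpM M T *ᵥ u‖ ≤ C * ‖u‖ := by
  refine ⟨∑ i, ∑ j, l1 (T i j), Finset.sum_nonneg fun i _ => Finset.sum_nonneg fun j _ =>
    l1_nonneg _, fun M _ u => ?_⟩
  refine norm_of_slice M _ _ (mul_nonneg (Finset.sum_nonneg fun i _ => Finset.sum_nonneg fun j _ =>
    l1_nonneg _) (norm_nonneg _)) fun i => ?_
  rw [OpM_mulVec]
  calc _ ≤ ∑ j, ‖Op M (T i j) *ᵥ (fun x => u (j, x))‖ := norm_sum_le _ _
    _ ≤ ∑ j, l1 (T i j) * ‖u‖ := by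
        refine Finset.sum_le_sum fun j _ => (Matrix.linfty_opNorm_mulVec _ _).trans ?_
        exact mul_le_mul (Op_norm M _) (norm_slice M u j) (norm_nonneg _) (l1_nonneg _)
    _ = (∑ j, l1 (T i j)) * ‖u‖ := by rw [Finset.sum_mul]
    _ ≤ _ := by
        refine mul_le_mul_of_nonneg_right ?_ (norm_nonneg _)
        exact Finset.single_le_sum (f := fun i => ∑ j, l1 (T i j))
          (fun i _ => Finset.sum_nonneg fun j _ => l1_nonneg _) (Finset.mem_univ i)

lemma key (T : Matrix J J (LP (I2 k))) (hT : ∀ z, (T.map (evz z)).det ≠ 0) :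
    ∃ K : ℝ, 0 < K ∧ ∀ᶠ M in atTop, ∀ [NeZero M], ∀ u : J × X k M → ℂ,
      ‖u‖ ≤ K * ‖OpM M T *ᵥ u‖ := by
  obtain ⟨h, hh⟩ := wiener T.det (fun z => by
    have := hT z
    rw [← evz_apply, AlgHom.map_det]; exact this) (1 / 4) (by norm_num)
  set H : Matrix J J (LP (I2 k)) := h • T.adjugate with hH
  have hHT : H * T = (h * T.det) • (1 : Matrix J J (LP (I2 k))) := by
    rw [hH, Matrix.smul_mul, Matrix.adjugate_mul, smul_smul]
  obtain ⟨C, hC0, hC⟩ := OpM_bound H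
  refine ⟨2 * C + 1, by linarith, ?_⟩
  set n : ℝ := (Fintype.card J : ℝ)
  have hn : 0 ≤ n := Nat.cast_nonneg _
  have hδ : 0 < 1 / (4 * (n * n + 1)) := by positivity
  have hev : ∀ᶠ M in atTop, ∀ i j l, ∀ [NeZero M],
      ‖Op M (H i j * T j l) - Op M (H i j) * Op M (T j l)‖ ≤ 1 / (4 * (n * n + 1)) := by
    simp only [eventually_all]
    intro i j l
    exact Op_mul _ _ _ hδ
  filter_upwards [hev] with M hM _ u
  set y := OpM M T *ᵥ u with hy
  have main : ‖u‖ ≤ C * ‖y‖ + (1 / 2) * ‖u‖ := by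
    refine norm_of_slice M _ _ (by positivity) fun i => ?_
    set us : J → X k M → ℂ := fun j x => u (j, x) with hus
    have e1 : us i = (fun x => (OpM M H *ᵥ y) (i, x)) - Op M (h * T.det - 1) *ᵥ us i
        + ∑ j, ∑ l, (Op M (H i j * T j l) - Op M (H i j) * Op M (T j l)) *ᵥ us l := by
      have e2 : (fun x => (OpM M H *ᵥ y) (i, x)) =
          ∑ j, ∑ l, (Op M (H i j) * Op M (T j l)) *ᵥ us l := by
        rw [OpM_mulVec]
        refine Finset.sum_congr rfl fun j _ => ?_
        rw [hy, OpM_mulVec, Matrix.mulVec_sum]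
        simp only [Matrix.mulVec_mulVec, hus]
      have e3 : ∑ j, ∑ l, Op M (H i j * T j l) *ᵥ us l = Op M (h * T.det) *ᵥ us i := by
        rw [Finset.sum_comm]
        have : ∀ l, ∑ j, Op M (H i j * T j l) *ᵥ us l
            = if l = i then Op M (h * T.det) *ᵥ us i else 0 := by
          intro l
          rw [← Matrix.sum_mulVec, ← map_sum, ← Matrix.mul_apply, hHT]
          by_cases hl : l = i
          · subst hl; simp
          · simp [hl, Matrix.one_apply_ne' hl]
        simp [this]
      simp only [Matrix.sub_mulVec, Finset.sum_sub_distrib, e2, e3, map_sub, Op_one,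
        Matrix.one_mulVec]
      abel
    change ‖us i‖ ≤ _
    rw [e1]
    have b1 : ‖fun x => (OpM M H *ᵥ y) (i, x)‖ ≤ C * ‖y‖ := (norm_slice M _ i).trans (hC M y)
    have b2 : ‖Op M (h * T.det - 1) *ᵥ us i‖ ≤ 1 / 4 * ‖u‖ :=
      (Matrix.linfty_opNorm_mulVec _ _).trans
        (mul_le_mul ((Op_norm M _).trans hh.le) (norm_slice M u i) (norm_nonneg _) (by norm_num))
    have b3 : ‖∑ j, ∑ l, (Op M (H i j * T j l) - Op M (H i j) * Op M (T j l)) *ᵥ us l‖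
        ≤ 1 / 4 * ‖u‖ := by
      calc _ ≤ ∑ j : J, ∑ l : J, (1 / (4 * (n * n + 1))) * ‖u‖ := by
            refine norm_sum_le_of_le _ fun j _ => norm_sum_le_of_le _ fun l _ => ?_
            exact (Matrix.linfty_opNorm_mulVec _ _).trans
              (mul_le_mul (hM i j l) (norm_slice M u l) (norm_nonneg _) hδ.le)
        _ = (n * n * (1 / (4 * (n * n + 1)))) * ‖u‖ := by
            simp [n]; ring
        _ ≤ _ := by
            gcongr
            rw [mul_one_div, div_le_div_iff₀ (by positivity) (by norm_num)]
            nlinarith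
    calc _ ≤ ‖(fun x => (OpM M H *ᵥ y) (i, x)) - Op M (h * T.det - 1) *ᵥ us i‖ + _ :=
          norm_add_le _ _
      _ ≤ (C * ‖y‖ + 1 / 4 * ‖u‖) + 1 / 4 * ‖u‖ :=
          add_le_add ((norm_sub_le _ _).trans (add_le_add b1 b2)) b3
      _ = _ := by ring
  nlinarith [norm_nonneg y, norm_nonneg u]

end HR
/-! Part 4 -/
namespace HR
set_option linter.unusedSectionVars false
open UnitAddTorus Filter Topology

variable {k : ℕ} {J : Type} [Fintype J] [DecidableEq J]

noncomputable def ng {ι : Type} : LP ι →ₗ[ℂ] LP ι := lin fun m => AddMonoidAlgebra.single (-m) 1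

lemma Op_ng (M : ℕ) [NeZero M] (a : LP (I2 k)) (x y : X k M) :
    Op M (ng a) x y = Op M a (-x) (-y) := by
  induction a using AddMonoidAlgebra.induction_linear with
  | zero => simp
  | add a b ha hb => simp only [map_add, Matrix.add_apply, ha, hb]
  | single m c => 
    rw [ng, lin_single, map_smul, Op, lin_single, lin_single]
    simp [Wm_neg_neg]

noncomputable def Dm (M : ℕ) [NeZero M] (F G : Matrix J J (LP (I2 k))) :
    Matrix (J × X k M) (J × X k M) ℂ :=
  OpM M F + (OpM M G).submatrix (fun p => (p.1, -p.2)) id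

noncomputable def Symb {ι : Type} (F G : Matrix J J (LP ι)) : Matrix (J ⊕ J) (J ⊕ J) (LP ι) :=
  Matrix.fromBlocks F (G.map ng) G (F.map ng)

def dbl (M : ℕ) (v : J × X k M → ℂ) : (J ⊕ J) × X k M → ℂ
  | (Sum.inl j, x) => v (j, x)
  | (Sum.inr j, x) => v (j, -x)

lemma Dm_mulVec (M : ℕ) [NeZero M] (F G : Matrix J J (LP (I2 k))) (v : J × X k M → ℂ) (j : J)
    (x : X k M) : (Dm M F G *ᵥ v) (j, x) =
      ∑ i, ∑ y, Op M (F j i) x y * v (i, y) + ∑ i, ∑ y, Op M (G j i) (-x) y * v (i, y) := by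
  simp only [Dm, Matrix.mulVec, dotProduct, Matrix.add_apply, add_mul, Finset.sum_add_distrib,
    Fintype.sum_prod_type, OpM, Matrix.of_apply, Matrix.submatrix_apply, id]

lemma Symb_mulVec_inl (M : ℕ) [NeZero M] (F G : Matrix J J (LP (I2 k))) (v : J × X k M → ℂ)
    (j : J) (x : X k M) :
    (OpM M (Symb F G) *ᵥ dbl M v) (Sum.inl j, x) = (Dm M F G *ᵥ v) (j, x) := by
  rw [Dm_mulVec]
  simp only [Matrix.mulVec, dotProduct, Fintype.sum_prod_type, OpM, Matrix.of_apply,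
    Fintype.sum_sum_type, Symb, Matrix.fromBlocks_apply₁₁, Matrix.fromBlocks_apply₁₂, dbl,
    Matrix.map_apply, Op_ng]
  congr 1
  refine Finset.sum_congr rfl fun i _ => ?_
  exact Fintype.sum_equiv (Equiv.neg _) _ _ (fun y => by simp)

lemma Symb_mulVec_inr (M : ℕ) [NeZero M] (F G : Matrix J J (LP (I2 k))) (v : J × X k M → ℂ)
    (j : J) (x : X k M) :
    (OpM M (Symb F G) *ᵥ dbl M v) (Sum.inr j, x) = (Dm M F G *ᵥ v) (j, -x) := by
  rw [Dm_mulVec]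
  simp only [Matrix.mulVec, dotProduct, Fintype.sum_prod_type, OpM, Matrix.of_apply,
    Fintype.sum_sum_type, Symb, Matrix.fromBlocks_apply₂₁, Matrix.fromBlocks_apply₂₂, dbl,
    Matrix.map_apply, Op_ng, neg_neg]
  rw [add_comm]
  congr 1
  refine Finset.sum_congr rfl fun i _ => ?_
  exact Fintype.sum_equiv (Equiv.neg _) _ _ (fun y => by simp)

lemma Dm_lower (F G : Matrix J J (LP (I2 k))) (hT : ∀ z, ((Symb F G).map (evz z)).det ≠ 0) :
    ∃ K : ℝ, 0 < K ∧ ∀ᶠ M in atTop, ∀ [NeZero M], ∀ v : J × X k M → ℂ,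
      ‖v‖ ≤ K * ‖Dm M F G *ᵥ v‖ := by
  obtain ⟨K, hK, h⟩ := key (Symb F G) hT
  refine ⟨K, hK, ?_⟩
  filter_upwards [h] with M hM _ v
  have h1 : ‖v‖ ≤ ‖dbl M v‖ := (pi_norm_le_iff_of_nonneg (norm_nonneg _)).mpr fun p =>
    norm_le_pi_norm (dbl M v) (Sum.inl p.1, p.2)
  have h2 : ‖OpM M (Symb F G) *ᵥ dbl M v‖ ≤ ‖Dm M F G *ᵥ v‖ := by
    refine (pi_norm_le_iff_of_nonneg (norm_nonneg _)).mpr ?_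
    rintro ⟨j | j, x⟩
    · rw [Symb_mulVec_inl]; exact norm_le_pi_norm (Dm M F G *ᵥ v) (j, x)
    · rw [Symb_mulVec_inr]; exact norm_le_pi_norm (Dm M F G *ᵥ v) (j, -x)
  calc ‖v‖ ≤ _ := h1
    _ ≤ _ := hM (dbl M v)
    _ ≤ _ := by gcongr

lemma Dm_bound (F G : Matrix J J (LP (I2 k))) : ∃ C : ℝ, 0 ≤ C ∧ ∀ (M : ℕ) [NeZero M],
    ∀ u : J × X k M → ℂ, ‖Dm M F G *ᵥ u‖ ≤ C * ‖u‖ := by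
  obtain ⟨C, hC, h⟩ := OpM_bound F
  obtain ⟨C', hC', h'⟩ := OpM_bound G
  refine ⟨C + C', by positivity, fun M _ u => ?_⟩
  rw [Dm, Matrix.add_mulVec, add_mul]
  refine (norm_add_le _ _).trans (add_le_add (h M u) (le_trans ?_ (h' M u)))
  refine (pi_norm_le_iff_of_nonneg (norm_nonneg _)).mpr fun p => ?_
  exact norm_le_pi_norm (OpM M G *ᵥ u) (p.1, -p.2)

lemma OpM_lin (M : ℕ) [NeZero M] (F F' : Matrix J J (LP (I2 k))) (t : ℂ) :
    OpM M (F + t • F') = OpM M F + t • OpM M F' := by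
  ext p q; simp [OpM]

lemma Dm_lin (M : ℕ) [NeZero M] (F F' G G' : Matrix J J (LP (I2 k))) (t : ℂ) :
    Dm M (F + t • F') (G + t • G') = Dm M F G + t • Dm M F' G' := by
  ext p q; simp [Dm, OpM_lin]; ring

lemma homotopy_inj (F F' G G' : Matrix J J (LP (I2 k)))
    (hT : ∀ t ∈ Set.Icc (0:ℝ) 1, ∀ z,
      ((Symb (F + (t:ℂ) • F') (G + (t:ℂ) • G')).map (evz z)).det ≠ 0) :
    ∀ᶠ M in atTop, ∀ t ∈ Set.Icc (0:ℝ) 1, ∀ [NeZero M], ∀ v : J × X k M → ℂ,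
      (Dm M F G + (t:ℂ) • Dm M F' G') *ᵥ v = 0 → v = 0 := by
  refine (isCompact_Icc (a := (0:ℝ)) (b := 1)).induction_on
    (p := fun s : Set ℝ => ∀ᶠ M in atTop, ∀ t ∈ s, ∀ [NeZero M], ∀ v : J × X k M → ℂ,
      (Dm M F G + (t:ℂ) • Dm M F' G') *ᵥ v = 0 → v = 0) ?_ ?_ ?_ ?_
  · simp
  · intro s t hst ht
    filter_upwards [ht] with M hM r hr using hM r (hst hr)
  · intro s t hs ht
    filter_upwards [hs, ht] with M h1 h2 r hr
    rcases hr with hr | hr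
    · exact h1 r hr
    · exact h2 r hr
  · intro t ht
    obtain ⟨K, hK, h⟩ := Dm_lower _ _ (hT t ht)
    obtain ⟨C, hC, hb⟩ := Dm_bound F' G'
    refine ⟨Metric.ball t (1 / (K * C + 1)),
      mem_nhdsWithin_of_mem_nhds (Metric.ball_mem_nhds _ (by positivity)), ?_⟩
    filter_upwards [h] with M hM r hr _ v hv
    have h1 := hM v
    rw [Dm_lin] at h1
    have h2 : (Dm M F G + (t:ℂ) • Dm M F' G') *ᵥ v = ((t - r : ℝ) : ℂ) • (Dm M F' G' *ᵥ v) := by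
      have : (Dm M F G + (t:ℂ) • Dm M F' G') *ᵥ v = (Dm M F G + (r:ℂ) • Dm M F' G') *ᵥ v +
          ((t - r : ℝ) : ℂ) • (Dm M F' G' *ᵥ v) := by
        simp only [Matrix.add_mulVec, Matrix.smul_mulVec]
        push_cast; rw [sub_smul]; abel
      rw [this, hv, zero_add]
    rw [h2, norm_smul, Complex.norm_real] at h1
    have h3 := hb M v
    rw [Metric.mem_ball, dist_comm, Real.dist_eq] at hr
    rw [Real.norm_eq_abs] at h1
    have h4 : |t - r| * (K * C + 1) < 1 := by rwa [lt_div_iff₀ (by positivity)] at hr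
    have h5 : ‖v‖ ≤ (|t - r| * (K * C)) * ‖v‖ := by
      calc ‖v‖ ≤ _ := h1
        _ ≤ K * (|t - r| * (C * ‖v‖)) := by gcongr
        _ = _ := by ring
    have h6 : |t - r| * (K * C) < 1 := by nlinarith [abs_nonneg (t - r)]
    have h7 : ‖v‖ ≤ 0 := by
      by_contra hne
      push Not at hne
      nlinarith
    exact norm_le_zero_iff.mp h7

end HR
/-! Part 5 -/
namespace HR
set_option linter.unusedSectionVars false
open Filter Topology

section npos
variable {n : Type} [Fintype n] [DecidableEq n]

open Classical in
noncomputable def npos (A : Matrix n n ℂ) : ℕ := A.charpoly.roots.countP (fun z => 0 < z.re)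

lemma npos_eq (A : Matrix n n ℂ) (hA : A.IsHermitian) :
    npos A = Fintype.card {i // 0 < hA.eigenvalues i} := by
  classical
  rw [npos, hA.roots_charpoly_eq_eigenvalues, Multiset.countP_map, Fintype.card_subtype]
  rfl

noncomputable def qf (A : Matrix n n ℂ) (x : n → ℂ) : ℝ := (star x ⬝ᵥ (A *ᵥ x)).re
noncomputable def nsq (x : n → ℂ) : ℝ := ∑ i, ‖x i‖ ^ 2

lemma nsq_pos (x : n → ℂ) (hx : x ≠ 0) : 0 < nsq x := by
  obtain ⟨i, hi⟩ := Function.ne_iff.mp hx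
  refine Finset.sum_pos' (fun _ _ => by positivity) ⟨i, Finset.mem_univ _, ?_⟩
  have : 0 < ‖x i‖ := norm_pos_iff.mpr hi
  positivity

lemma qf_conj (A U : Matrix n n ℂ) (y : n → ℂ) : qf A (U *ᵥ y) = qf (Uᴴ * A * U) y := by
  rw [qf, qf, Matrix.star_mulVec, ← Matrix.dotProduct_mulVec]
  simp only [Matrix.mulVec_mulVec, Matrix.mul_assoc]

lemma qf_diag (l : n → ℝ) (y : n → ℂ) :
    qf (Matrix.diagonal (fun i => (l i : ℂ))) y = ∑ i, l i * ‖y i‖ ^ 2 := by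
  rw [qf, dotProduct, Complex.re_sum]
  refine Finset.sum_congr rfl fun i _ => ?_
  rw [Matrix.mulVec_diagonal, Pi.star_apply]
  have : star (y i) * ((l i : ℂ) * y i) = (l i : ℂ) * ((starRingEnd ℂ) (y i) * y i) := by
    change (starRingEnd ℂ) (y i) * _ = _
    ring
  rw [this, Complex.conj_mul', ← Complex.ofReal_pow, ← Complex.ofReal_mul, Complex.ofReal_re]

lemma qf_one (y : n → ℂ) : qf 1 y = nsq y := by
  have := qf_diag (fun _ : n => 1) y
  simpa [nsq] using this

lemma nsq_unit (U : Matrix n n ℂ) (hU : Uᴴ * U = 1) (y : n → ℂ) : nsq (U *ᵥ y) = nsq y := by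
  rw [← qf_one, qf_conj, Matrix.mul_one, hU, qf_one]

lemma spec (A : Matrix n n ℂ) (hA : A.IsHermitian) : ∃ U : Matrix n n ℂ, Uᴴ * U = 1 ∧ U * Uᴴ = 1 ∧
    Uᴴ * A * U = Matrix.diagonal (fun i => (hA.eigenvalues i : ℂ)) := by
  refine ⟨hA.eigenvectorUnitary, ?_, ?_, ?_⟩
  · exact Unitary.coe_star_mul_self hA.eigenvectorUnitary
  · exact Unitary.coe_mul_star_self hA.eigenvectorUnitary
  · have := hA.conjStarAlgAut_star_eigenvectorUnitary
    rw [Unitary.conjStarAlgAut_star_apply] at this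
    exact this

lemma cmp (A A' : Matrix n n ℂ) (hA : A.IsHermitian) (hA' : A'.IsHermitian)
    (h : npos A' < npos A) : ∃ x : n → ℂ, x ≠ 0 ∧
      (∀ c, (∀ i, 0 < hA.eigenvalues i → c ≤ hA.eigenvalues i) → c * nsq x ≤ qf A x) ∧
      (∀ c, (∀ i, hA'.eigenvalues i ≤ 0 → hA'.eigenvalues i ≤ -c) → qf A' x ≤ -c * nsq x) := by
  classical
  obtain ⟨U, hU1, hU2, hU3⟩ := spec A hA
  obtain ⟨V, hV1, hV2, hV3⟩ := spec A' hA'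
  rw [npos_eq A hA, npos_eq A' hA'] at h
  let ext : ({i // 0 < hA.eigenvalues i} → ℂ) →ₗ[ℂ] (n → ℂ) :=
    { toFun := fun y i => if h : 0 < hA.eigenvalues i then y ⟨i, h⟩ else 0
      map_add' := fun y z => by ext i; by_cases h : 0 < hA.eigenvalues i <;> simp [h]
      map_smul' := fun c z => by ext i; by_cases h : 0 < hA.eigenvalues i <;> simp [h] }
  let f : ({i // 0 < hA.eigenvalues i} → ℂ) →ₗ[ℂ] ({i // 0 < hA'.eigenvalues i} → ℂ) :=
    (LinearMap.funLeft ℂ ℂ Subtype.val).comp ((Matrix.mulVecLin (Vᴴ * U)).comp ext)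
  have hk : LinearMap.ker f ≠ ⊥ := LinearMap.ker_ne_bot_of_finrank_lt (by simpa using h)
  obtain ⟨y, hy, hy0⟩ := (Submodule.ne_bot_iff _).mp hk
  have hext : ext y ≠ 0 := by
    intro h0
    apply hy0
    ext ⟨i, hi⟩
    have := congrFun h0 i
    simpa [ext, hi] using this
  have hz : ∀ i, 0 < hA'.eigenvalues i → ((Vᴴ * U) *ᵥ ext y) i = 0 := fun i hi =>
    congrFun (LinearMap.mem_ker.mp hy) ⟨i, hi⟩
  have hxV : U *ᵥ ext y = V *ᵥ ((Vᴴ * U) *ᵥ ext y) := by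
    rw [Matrix.mulVec_mulVec, ← Matrix.mul_assoc, hV2, Matrix.one_mul]
  refine ⟨U *ᵥ ext y, ?_, ?_, ?_⟩
  · intro h0
    apply hext
    have := congrArg (fun w => Uᴴ *ᵥ w) h0
    simpa [Matrix.mulVec_mulVec, hU1] using this
  · intro c hc
    rw [nsq_unit U hU1, qf_conj, hU3, qf_diag, nsq, Finset.mul_sum]
    refine Finset.sum_le_sum fun i _ => ?_
    by_cases hi : 0 < hA.eigenvalues i
    · exact mul_le_mul_of_nonneg_right (hc i hi) (by positivity)
    · have : ext y i = 0 := by simp [ext, hi]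
      simp [this]
  · intro c hc
    rw [hxV, nsq_unit V hV1, qf_conj, hV3, qf_diag, nsq, Finset.mul_sum]
    refine Finset.sum_le_sum fun i _ => ?_
    by_cases hi : 0 < hA'.eigenvalues i
    · rw [hz i hi]; simp
    · exact mul_le_mul_of_nonneg_right (hc i (not_lt.mp hi)) (by positivity)

lemma gap (A : Matrix n n ℂ) (hA : A.IsHermitian) (hi : ∀ v, A *ᵥ v = 0 → v = 0) :
    ∃ c > 0, (∀ i, 0 < hA.eigenvalues i → c ≤ hA.eigenvalues i) ∧
      (∀ i, hA.eigenvalues i ≤ 0 → hA.eigenvalues i ≤ -c) := by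
  have hne : ∀ i, hA.eigenvalues i ≠ 0 := by
    intro i h0
    have h1 := hA.mulVec_eigenvectorBasis i
    rw [h0, zero_smul] at h1
    have h2 := hi _ h1
    have h3 := hA.eigenvectorBasis.orthonormal.ne_zero i
    apply h3
    ext j
    exact congrFun h2 j
  rcases isEmpty_or_nonempty n with hn | hn
  · exact ⟨1, one_pos, fun i => hn.elim i, fun i => hn.elim i⟩
  · obtain ⟨i0, h0⟩ := Finite.exists_min (fun i => |hA.eigenvalues i|)
    refine ⟨|hA.eigenvalues i0|, abs_pos.mpr (hne i0), fun i h => ?_, fun i h => ?_⟩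
    · have := h0 i; rwa [abs_of_pos h] at this
    · have := h0 i; rw [abs_of_nonpos h] at this; linarith

lemma npos_near (A A' : Matrix n n ℂ) (hA : A.IsHermitian) (hA' : A'.IsHermitian) (c η : ℝ)
    (hc1 : ∀ i, 0 < hA.eigenvalues i → c ≤ hA.eigenvalues i)
    (hc2 : ∀ i, hA.eigenvalues i ≤ 0 → hA.eigenvalues i ≤ -c)
    (hη : η < c) (hq : ∀ x, |qf A' x - qf A x| ≤ η * nsq x) : npos A' = npos A := by
  rcases lt_trichotomy (npos A') (npos A) with h | h | h
  · obtain ⟨x, hx, h1, h2⟩ := cmp A A' hA hA' h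
    have h1 := h1 c hc1
    have h2 := h2 0 (fun i hi => by simpa using hi)
    have h3 := abs_le.mp (hq x)
    have := nsq_pos x hx
    nlinarith
  · exact h
  · obtain ⟨x, hx, h1, h2⟩ := cmp A' A hA' hA h
    have h1 := h1 0 (fun i hi => hi.le)
    have h2 := h2 c hc2
    have h3 := abs_le.mp (hq x)
    have := nsq_pos x hx
    nlinarith

lemma qf_bound (B : Matrix n n ℂ) : ∃ C, 0 ≤ C ∧ ∀ x, |qf B x| ≤ C * nsq x := by
  refine ⟨∑ i, ∑ j, ‖B i j‖, by positivity, fun x => ?_⟩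
  refine (Complex.abs_re_le_norm _).trans ?_
  simp only [dotProduct, Matrix.mulVec, Finset.mul_sum]
  rw [Finset.sum_mul]
  refine norm_sum_le_of_le _ fun i _ => ?_
  rw [Finset.sum_mul]
  refine norm_sum_le_of_le _ fun j _ => ?_
  have h1 : ∀ i, ‖x i‖ ^ 2 ≤ nsq x := fun i =>
    Finset.single_le_sum (f := fun i => ‖x i‖ ^ 2) (fun _ _ => by positivity) (Finset.mem_univ i)
  rw [norm_mul, norm_mul, Pi.star_apply, norm_star]
  have : ‖x i‖ * ‖x j‖ ≤ nsq x := by nlinarith [h1 i, h1 j, sq_nonneg (‖x i‖ - ‖x j‖)]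
  nlinarith [norm_nonneg (B i j)]

lemma qf_add_smul (A B : Matrix n n ℂ) (t : ℝ) (x : n → ℂ) :
    qf (A + (t:ℂ) • B) x = qf A x + t * qf B x := by
  simp [qf, Matrix.add_mulVec, Matrix.smul_mulVec]

lemma npos_path (A B : Matrix n n ℂ) (hA : A.IsHermitian) (hB : B.IsHermitian)
    (hi : ∀ t ∈ Set.Icc (0:ℝ) 1, ∀ v, (A + (t:ℂ) • B) *ᵥ v = 0 → v = 0) :
    npos A = npos (A + B) := by
  have hH : ∀ t : ℝ, (A + (t:ℂ) • B).IsHermitian := fun t => by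
    refine hA.add ?_
    rw [Matrix.IsHermitian, Matrix.conjTranspose_smul, hB.eq]; simp
  obtain ⟨C, hC, hb⟩ := qf_bound B
  have hcont : ContinuousOn (fun t : ℝ => npos (A + (t:ℂ) • B)) (Set.Icc 0 1) := by
    intro t ht
    refine ContinuousAt.continuousWithinAt ?_
    obtain ⟨c, hc, h1, h2⟩ := gap _ (hH t) (hi t ht)
    refine (tendsto_const_nhds (x := npos (A + (t:ℂ) • B))).congr' ?_
    filter_upwards [Metric.ball_mem_nhds t (show 0 < c / (C + 1) by positivity)] with r hr
    symm
    refine npos_near _ _ (hH t) (hH r) c (|r - t| * C) h1 h2 ?_ ?_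
    · rw [Metric.mem_ball, Real.dist_eq, lt_div_iff₀ (by positivity)] at hr
      nlinarith [abs_nonneg (r - t)]
    · intro x
      rw [qf_add_smul, qf_add_smul]
      have : qf A x + r * qf B x - (qf A x + t * qf B x) = (r - t) * qf B x := by ring
      rw [this, abs_mul, mul_assoc]
      exact mul_le_mul_of_nonneg_left (hb x) (abs_nonneg _)
  have := isPreconnected_Icc.constant hcont (x := 0) (y := 1) (by simp) (by simp)
  simpa using this

/-- Hermitian involutions -/
lemma npos_invol (A : Matrix n n ℂ) (hA : A.IsHermitian) (h2 : A * A = 1) :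
    (2 * npos A : ℂ) = Fintype.card n + A.trace := by
  classical
  have hsq : ∀ i, hA.eigenvalues i = 1 ∨ hA.eigenvalues i = -1 := by
    intro i
    obtain ⟨U, hU1, hU2, hU3⟩ := spec A hA
    have : (Uᴴ * A * U) * (Uᴴ * A * U) = 1 := by
      calc _ = Uᴴ * A * (U * Uᴴ) * A * U := by simp only [Matrix.mul_assoc]
        _ = Uᴴ * (A * A) * U := by rw [hU2]; simp only [Matrix.mul_assoc, Matrix.one_mul]
        _ = 1 := by rw [h2, Matrix.mul_one, hU1]
    rw [hU3, Matrix.diagonal_mul_diagonal] at this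
    have := congrFun (congrFun this i) i
    simp only [Matrix.diagonal_apply_eq, Matrix.one_apply_eq] at this
    exact mul_self_eq_one_iff.mp (by exact_mod_cast this)
  rw [npos_eq A hA, hA.trace_eq_sum_eigenvalues, Fintype.card_subtype, Finset.card_filter]
  have : (Fintype.card n : ℂ) = ∑ i : n, 1 := by simp
  rw [this, ← Finset.sum_add_distrib]
  push_cast
  rw [Finset.mul_sum]
  refine Finset.sum_congr rfl fun i _ => ?_
  rcases hsq i with h | h <;> rw [h] <;> norm_num

lemma npos_reindex {n' : Type} [Fintype n'] [DecidableEq n'] (e : n ≃ n') (A : Matrix n n ℂ) :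
    npos (Matrix.reindex e e A) = npos A := by
  rw [npos, Matrix.charpoly_reindex, npos]

open Kronecker in
lemma npos_kron {b : Type} [Fintype b] [DecidableEq b] (A : Matrix n n ℂ) :
    npos ((1 : Matrix b b ℂ) ⊗ₖ A) = Fintype.card b * npos A := by
  have h : ((1 : Matrix b b ℂ) ⊗ₖ A).charpoly = A.charpoly ^ Fintype.card b := by
    have : ((1 : Matrix b b ℂ) ⊗ₖ A).charmatrix =
        (1 : Matrix b b (Polynomial ℂ)) ⊗ₖ A.charmatrix := by
      ext ⟨i, x⟩ ⟨j, y⟩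
      by_cases h1 : i = j
      · subst h1
        simp [Matrix.charmatrix_apply, Matrix.kroneckerMap_apply, Matrix.diagonal_apply]
      · simp [Matrix.charmatrix_apply, Matrix.kroneckerMap_apply, Matrix.diagonal_apply, h1]
    rw [Matrix.charpoly, this, Matrix.det_kronecker]
    simp [Matrix.charpoly]
  rw [npos, h, Polynomial.roots_pow, Multiset.countP_nsmul, npos]

end npos

end HR
/-! Part 6 -/
namespace HR
set_option linter.unusedSectionVars false
open UnitAddTorus Filter Topology

open ComplexOrder in
lemma blk {J : Type} [Fintype J] [DecidableEq J] (F G : Matrix J J ℂ) (hF : Fᴴ = F)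
    (hc : F * G = G * F) (h : F.det ≠ 0 ∨ G.det ≠ 0) :
    (Matrix.fromBlocks F Gᴴ G (-F)).det ≠ 0 := by
  have hc' : F * Gᴴ = Gᴴ * F := by
    have := congrArg Matrix.conjTranspose hc
    rw [Matrix.conjTranspose_mul, Matrix.conjTranspose_mul, hF] at this
    exact this.symm
  have inj : ∀ A : Matrix J J ℂ, A.det ≠ 0 → ∀ v, A *ᵥ v = 0 → v = 0 := by
    intro A hA v hv
    by_contra hv0
    exact hA (Matrix.exists_mulVec_eq_zero_iff.mp ⟨v, hv0, hv⟩)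
  have pos : ∀ A : Matrix J J ℂ, ∀ v, star v ⬝ᵥ (F *ᵥ (F *ᵥ v)) + star v ⬝ᵥ (Aᴴ *ᵥ (A *ᵥ v)) = 0 →
      F *ᵥ v = 0 ∧ A *ᵥ v = 0 := by
    intro A v hv
    have e : ∀ A : Matrix J J ℂ, star v ⬝ᵥ (Aᴴ *ᵥ (A *ᵥ v)) = star (A *ᵥ v) ⬝ᵥ (A *ᵥ v) := by
      intro A
      rw [Matrix.star_mulVec, ← Matrix.dotProduct_mulVec]
    have e1 := e F
    rw [hF] at e1
    rw [e1, e A] at hv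
    have n1 := dotProduct_star_self_nonneg (F *ᵥ v)
    have n2 := dotProduct_star_self_nonneg (A *ᵥ v)
    obtain ⟨h1, h2⟩ := (add_eq_zero_iff_of_nonneg n1 n2).mp hv
    exact ⟨dotProduct_star_self_eq_zero.mp h1,
      dotProduct_star_self_eq_zero.mp h2⟩
  intro hdet
  obtain ⟨v, hv0, hv⟩ := Matrix.exists_mulVec_eq_zero_iff.mpr hdet
  apply hv0
  set u : J → ℂ := fun j => v (Sum.inl j) with hu
  set w : J → ℂ := fun j => v (Sum.inr j) with hw
  have hvv : v = Sum.elim u w := by ext (j | j) <;> rfl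
  rw [hvv, Matrix.fromBlocks_mulVec] at hv
  have e1 : F *ᵥ u + Gᴴ *ᵥ w = 0 := by
    ext j; have := congrFun hv (Sum.inl j); simpa using this
  have e2 : G *ᵥ u - F *ᵥ w = 0 := by
    ext j; have := congrFun hv (Sum.inr j)
    simpa [Matrix.neg_mulVec, sub_eq_add_neg] using this
  have e2' : F *ᵥ w = G *ᵥ u := (sub_eq_zero.mp e2).symm
  have e1' : F *ᵥ u = - (Gᴴ *ᵥ w) := eq_neg_of_add_eq_zero_left e1
  have f1 : F *ᵥ (F *ᵥ u) + Gᴴ *ᵥ (G *ᵥ u) = 0 := by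
    rw [e1', Matrix.mulVec_neg, Matrix.mulVec_mulVec, hc', ← Matrix.mulVec_mulVec, e2']
    simp
  have f2 : F *ᵥ (F *ᵥ w) + G *ᵥ (Gᴴ *ᵥ w) = 0 := by
    rw [e2', Matrix.mulVec_mulVec, hc, ← Matrix.mulVec_mulVec, e1', Matrix.mulVec_neg]
    simp
  obtain ⟨a1, a2⟩ := pos G u (by rw [← dotProduct_add, f1, dotProduct_zero])
  obtain ⟨b1, b2⟩ := pos Gᴴ w (by
    rw [Matrix.conjTranspose_conjTranspose, ← dotProduct_add, f2, dotProduct_zero])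
  rw [hvv]
  rcases h with h | h
  · rw [inj F h u a1, inj F h w b1]; ext (j | j) <;> rfl
  · have : Gᴴ.det ≠ 0 := by rw [Matrix.det_conjTranspose]; simpa using h
    rw [inj G h u a2, inj _ this w b2]; ext (j | j) <;> rfl

abbrev BB (k : ℕ) := I2 k → Bool

noncomputable def chi {k : ℕ} (m p : BB k) : ℂ := ∏ i, if m i && p i then -1 else 1

lemma chi_comm {k : ℕ} (m p : BB k) : chi m p = chi p m := by
  simp [chi, Bool.and_comm]

lemma chi_star {k : ℕ} (m p : BB k) : star (chi m p) = chi m p := by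
  rw [chi, star_prod]
  refine Finset.prod_congr rfl fun i _ => ?_
  split_ifs <;> simp

lemma chi_sq {k : ℕ} (m p : BB k) : chi m p * chi m p = 1 := by
  rw [chi, ← Finset.prod_mul_distrib]
  refine Finset.prod_eq_one fun i _ => ?_
  split_ifs <;> simp

lemma chi_orth {k : ℕ} (p q : BB k) : ∑ m, chi m p * chi m q = if p = q then 4 ^ k else 0 := by
  have h : ∑ m : BB k, chi m p * chi m q =
      ∏ i, ∑ b : Bool, ((if b && p i then -1 else 1 : ℂ) * (if b && q i then -1 else 1)) := by
    rw [Fintype.prod_sum]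
    refine Finset.sum_congr rfl fun m _ => ?_
    rw [chi, chi, ← Finset.prod_mul_distrib]
  rw [h]
  have h2 : ∀ i, ∑ b : Bool, ((if b && p i then -1 else 1 : ℂ) * (if b && q i then -1 else 1)) =
      if p i = q i then 2 else 0 := by
    intro i
    rw [Fintype.sum_bool]
    cases p i <;> cases q i <;> norm_num
  simp_rw [h2]
  split_ifs with hpq
  · subst hpq; simp [← two_mul, pow_mul]; norm_num
  · obtain ⟨i, hi⟩ := Function.ne_iff.mp hpq
    exact Finset.prod_eq_zero (Finset.mem_univ i) (by simp [hi])

variable {k : ℕ} {J : Type} [Fintype J] [DecidableEq J]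

def em (m : BB k) : I2 k → ℤ := fun i => if m i then 1 else 0

noncomputable def sn (l : I2 k) : LP (I2 k) :=
  AddMonoidAlgebra.single (Pi.single l 1) (1 / (2 * Complex.I)) +
    AddMonoidAlgebra.single (-Pi.single l 1) (-(1 / (2 * Complex.I)))

noncomputable def Fs (a : I2 k → Matrix J J ℂ) : Matrix J J (LP (I2 k)) :=
  Matrix.of fun i j => ∑ l, a l i j • sn l

noncomputable def cf (mp : BB k → Matrix J J ℂ) (m : BB k) : Matrix J J ℂ :=
  ((4:ℂ) ^ k)⁻¹ • ∑ p, chi m p • mp p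

noncomputable def Gs (mp : BB k → Matrix J J ℂ) : Matrix J J (LP (I2 k)) :=
  Matrix.of fun i j => ∑ m, cf mp m i j • AddMonoidAlgebra.single (em m) 1

lemma Fs_lin (a a' : I2 k → Matrix J J ℂ) (t : ℂ) : Fs (a + t • a') = Fs a + t • Fs a' := by
  ext1 i j
  simp [Fs, add_smul, Finset.sum_add_distrib, mul_smul, Finset.smul_sum]

lemma cf_lin (a a' : BB k → Matrix J J ℂ) (t : ℂ) (m : BB k) :
    cf (a + t • a') m = cf a m + t • cf a' m := by
  simp only [cf, Pi.add_apply, Pi.smul_apply, smul_add, Finset.sum_add_distrib]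
  congr 1
  rw [smul_comm t ((4:ℂ) ^ k)⁻¹, Finset.smul_sum (r := t)]
  exact congrArg _ (Finset.sum_congr rfl fun p _ => smul_comm _ _ _)

lemma Gs_lin (a a' : BB k → Matrix J J ℂ) (t : ℂ) : Gs (a + t • a') = Gs a + t • Gs a' := by
  ext1 i j
  simp [Gs, cf_lin, add_smul, Finset.sum_add_distrib, mul_smul, Finset.smul_sum]

lemma cf_herm (mp : BB k → Matrix J J ℂ) (h : ∀ p, (mp p)ᴴ = mp p) (m : BB k) :
    (cf mp m)ᴴ = cf mp m := by
  simp only [cf, Matrix.conjTranspose_smul, Matrix.conjTranspose_sum, chi_star, h]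
  simp

noncomputable def wz (z : UnitAddTorus (I2 k)) (l : I2 k) : ℂ := fourier 1 (z l)

lemma evz_single {ι : Type} [Fintype ι] (z : UnitAddTorus ι) (m : ι → ℤ) (c : ℂ) :
    evz z (AddMonoidAlgebra.single m c) = c * mFourier m z := by
  rw [evz_apply, ev_single]; rfl

lemma ng_single {ι : Type} (m : ι → ℤ) (c : ℂ) :
    ng (AddMonoidAlgebra.single m c) = AddMonoidAlgebra.single (-m) c := by
  rw [ng, lin_single, AddMonoidAlgebra.smul_single]; simp

lemma evz_sn (z : UnitAddTorus (I2 k)) (l : I2 k) : evz z (sn l) = ((wz z l).im : ℂ) := by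
  rw [sn, map_add, evz_single, evz_single, mFourier_neg, mFourier_single]
  change _ * wz z l + _ * (starRingEnd ℂ) (wz z l) = _
  have := Complex.sub_conj (wz z l)
  have h2 : (wz z l).im = (wz z l - (starRingEnd ℂ) (wz z l)) / (2 * Complex.I) := by
    rw [this]; field_simp; push_cast; ring
  rw [h2]; ring

lemma ng_sn (l : I2 k) : ng (sn l) = - sn l := by
  rw [sn, map_add, ng_single, ng_single, neg_neg, neg_add]
  simp only [← AddMonoidAlgebra.single_neg, neg_neg]
  rw [add_comm]

lemma Fs_evz (z : UnitAddTorus (I2 k)) (a : I2 k → Matrix J J ℂ) :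
    (Fs a).map (evz z) = ∑ l, ((wz z l).im : ℂ) • a l := by
  ext i j
  simp [Fs, Matrix.sum_apply, evz_sn, mul_comm]

lemma Fs_ng (z : UnitAddTorus (I2 k)) (a : I2 k → Matrix J J ℂ) :
    ((Fs a).map ng).map (evz z) = - ∑ l, ((wz z l).im : ℂ) • a l := by
  ext i j
  simp [Fs, Matrix.sum_apply, evz_sn, ng_sn, mul_comm]
  ring

lemma Gs_evz (z : UnitAddTorus (I2 k)) (mp : BB k → Matrix J J ℂ) :
    (Gs mp).map (evz z) = ∑ m, mFourier (em m) z • cf mp m := by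
  ext i j
  simp [Gs, Matrix.sum_apply, evz_single, mul_comm]

lemma Gs_ng (z : UnitAddTorus (I2 k)) (mp : BB k → Matrix J J ℂ) (h : ∀ p, (mp p)ᴴ = mp p) :
    ((Gs mp).map ng).map (evz z) = ((Gs mp).map (evz z))ᴴ := by
  rw [Gs_evz, Matrix.conjTranspose_sum]
  simp only [Matrix.conjTranspose_smul, cf_herm mp h]
  ext i j
  simp [Gs, Matrix.sum_apply, evz_single, ng_single, mFourier_neg, mul_comm]

lemma cf_comm (A : Matrix J J ℂ) (mp : BB k → Matrix J J ℂ) (h : ∀ p, A * mp p = mp p * A)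
    (m : BB k) : A * cf mp m = cf mp m * A := by
  simp only [cf, Matrix.mul_smul, Matrix.smul_mul, Matrix.mul_sum, Matrix.sum_mul, h]

lemma symb_ne (a : I2 k → Matrix J J ℂ) (mp : BB k → Matrix J J ℂ) (ha : ∀ l, (a l)ᴴ = a l)
    (hm : ∀ p, (mp p)ᴴ = mp p) (hc : ∀ l p, a l * mp p = mp p * a l) (z : UnitAddTorus (I2 k))
    (h : (∑ l, ((wz z l).im : ℂ) • a l).det ≠ 0 ∨ (∑ m, mFourier (em m) z • cf mp m).det ≠ 0) :
    ((Symb (Fs a) (Gs mp)).map (evz z)).det ≠ 0 := by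
  rw [Symb, Matrix.fromBlocks_map, Fs_ng, Gs_ng z mp hm, Fs_evz, Gs_evz]
  refine blk _ _ ?_ ?_ h
  · rw [Matrix.conjTranspose_sum]
    refine Finset.sum_congr rfl fun l _ => ?_
    rw [Matrix.conjTranspose_smul, ha]; simp
  · simp only [Matrix.mul_sum, Matrix.sum_mul, Matrix.mul_smul, Matrix.smul_mul,
      fun l => cf_comm (a l) mp (hc l)]
    simp only [Finset.smul_sum]
    rw [Finset.sum_comm]
    refine Finset.sum_congr rfl fun l _ => Finset.sum_congr rfl fun m _ => ?_
    rw [smul_comm]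

lemma mF_em (z : UnitAddTorus (I2 k)) (m : BB k) :
    mFourier (em m) z = ∏ i, if m i then wz z i else 1 := by
  change ∏ i, fourier (em m i) (z i) = _
  refine Finset.prod_congr rfl fun i _ => ?_
  by_cases h : m i <;> simp [em, h, wz]

lemma wz_norm (z : UnitAddTorus (I2 k)) (l : I2 k) : ‖wz z l‖ = 1 := by
  rw [wz, fourier_apply]; exact Circle.norm_coe _

lemma Gs_corner (z : UnitAddTorus (I2 k)) (mp : BB k → Matrix J J ℂ) (hz : ∀ l, (wz z l).im = 0) :
    ∃ p, ∑ m, mFourier (em m) z • cf mp m = mp p := by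
  classical
  refine ⟨fun l => decide (wz z l = -1), ?_⟩
  set p : BB k := fun l => decide (wz z l = -1) with hp
  have hw : ∀ l, wz z l = 1 ∨ wz z l = -1 := by
    intro l
    have h1 : wz z l = ((wz z l).re : ℂ) := by
      apply Complex.ext <;> simp [hz l]
    have h2 := wz_norm z l
    rw [h1, Complex.norm_real, Real.norm_eq_abs] at h2
    rw [h1]
    rcases abs_eq (zero_le_one) |>.mp h2 with h | h <;> rw [h] <;> simp
  have hchi : ∀ m, mFourier (em m) z = chi m p := by
    intro m
    rw [mF_em, chi]
    refine Finset.prod_congr rfl fun i _ => ?_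
    by_cases hm : m i
    · rcases hw i with h | h
      · have : ¬ ((1:ℂ) = -1) := by norm_num
        simp [hm, hp, h, this]
      · simp [hm, hp, h]
    · simp [hm]
  simp_rw [hchi, cf, Finset.smul_sum]
  rw [Finset.sum_comm]
  have : ∀ q, ∑ m, chi m p • (((4:ℂ) ^ k)⁻¹ • chi m q • mp q) = if p = q then mp q else 0 := by
    intro q
    simp only [smul_smul]
    rw [← Finset.sum_smul]
    have e : ∑ m, chi m p * (((4:ℂ) ^ k)⁻¹ * chi m q) = ((4:ℂ) ^ k)⁻¹ * ∑ m, chi m p * chi m q := by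
      rw [Finset.mul_sum]; refine Finset.sum_congr rfl fun m _ => by ring
    rw [e, chi_orth]
    split_ifs with h
    · rw [inv_mul_cancel₀ (pow_ne_zero _ (by norm_num)), one_smul]
    · simp
  simp_rw [this]
  simp

/-- generic symbol condition -/
lemma symb_ne' (a : I2 k → Matrix J J ℂ) (mp : BB k → Matrix J J ℂ) (ha : ∀ l, (a l)ᴴ = a l)
    (hm : ∀ p, (mp p)ᴴ = mp p) (hc : ∀ l p, a l * mp p = mp p * a l)
    (hd : ∀ c : I2 k → ℝ, c ≠ 0 → (∑ l, (c l : ℂ) • a l).det ≠ 0)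
    (hp : ∀ p, (mp p).det ≠ 0) (z : UnitAddTorus (I2 k)) :
    ((Symb (Fs a) (Gs mp)).map (evz z)).det ≠ 0 := by
  refine symb_ne a mp ha hm hc z ?_
  by_cases h : ∀ l, (wz z l).im = 0
  · right
    obtain ⟨p, h⟩ := Gs_corner z mp h
    rw [h]; exact hp p
  · left
    apply hd (fun l => (wz z l).im)
    intro h0
    exact h fun l => congrFun h0 l

lemma Op_sn_star (M : ℕ) [NeZero M] (l : I2 k) (x y : X k M) :
    star (Op M (sn l) y x) = Op M (sn l) x y := by
  simp only [sn, map_add, Op, lin_single, Matrix.add_apply, Matrix.smul_apply, smul_eq_mul,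
    star_add, star_mul', Wm_star, neg_neg]
  rw [add_comm]
  congr 2 <;> simp

lemma Op_em_star (M : ℕ) [NeZero M] (m : I2 k → ℤ) (x y : X k M) :
    star (Op M (AddMonoidAlgebra.single m 1) (-y) x) = Op M (AddMonoidAlgebra.single m 1) (-x) y := by
  simp only [Op, lin_single, one_smul, Wm_star]
  rw [← Wm_neg_neg, neg_neg]

lemma Dm_herm (M : ℕ) [NeZero M] (a : I2 k → Matrix J J ℂ) (mp : BB k → Matrix J J ℂ)
    (ha : ∀ l, (a l)ᴴ = a l) (hm : ∀ p, (mp p)ᴴ = mp p) : (Dm M (Fs a) (Gs mp)).IsHermitian := by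
  ext ⟨i, x⟩ ⟨j, y⟩
  have ha' : ∀ l, star (a l j i) = a l i j := fun l => congrFun (congrFun (ha l) i) j
  have hm' : ∀ m, star (cf mp m j i) = cf mp m i j :=
    fun m => congrFun (congrFun (cf_herm mp hm m) i) j
  simp only [Matrix.conjTranspose_apply, Dm, Matrix.add_apply, OpM, Matrix.of_apply, Fs, Gs,
    Matrix.submatrix_apply, id, map_sum, map_smul, Matrix.sum_apply, Matrix.smul_apply, star_add,
    star_sum, smul_eq_mul, star_mul', Op_sn_star, Op_em_star, ha', hm']

lemma stage (a a' : I2 k → Matrix J J ℂ) (mp mp' : BB k → Matrix J J ℂ) (ha : ∀ l, (a l)ᴴ = a l)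
    (hm : ∀ p, (mp p)ᴴ = mp p) (ha' : ∀ l, (a' l)ᴴ = a' l) (hm' : ∀ p, (mp' p)ᴴ = mp' p)
    (h : ∀ t ∈ Set.Icc (0:ℝ) 1, ∀ z,
      ((Symb (Fs (a + (t:ℂ) • a')) (Gs (mp + (t:ℂ) • mp'))).map (evz z)).det ≠ 0) :
    ∀ᶠ M in atTop, ∀ [NeZero M], npos (Dm M (Fs a) (Gs mp)) =
      npos (Dm M (Fs (a + a')) (Gs (mp + mp'))) := by
  simp only [Fs_lin, Gs_lin] at h
  filter_upwards [homotopy_inj _ _ _ _ h] with M hM _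
  have h1 := npos_path _ _ (Dm_herm M a mp ha hm) (Dm_herm M a' mp' ha' hm') (fun t ht => hM t ht)
  rw [h1]
  have h2 := Dm_lin M (Fs a) (Fs a') (Gs mp) (Gs mp') 1
  rw [← Fs_lin, ← Gs_lin, one_smul, one_smul, one_smul] at h2
  rw [h2]

end HR
/-! Part 7 -/
namespace HR
set_option linter.unusedSectionVars false
open UnitAddTorus Filter Topology

variable {k : ℕ} {Q : Type} [Fintype Q] [DecidableEq Q]

noncomputable def mp0 (p : BB k) : Matrix (BB k × Q) (BB k × Q) ℂ := diagonal fun j => chi j.1 p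

lemma cf_mp0 (m : BB k) :
    cf (mp0 (Q := Q)) m = diagonal fun j => if j.1 = m then (1 : ℂ) else 0 := by
  ext i j
  simp only [cf, mp0, Matrix.smul_apply, Matrix.sum_apply, diagonal_apply, smul_eq_mul]
  by_cases h : i = j
  · simp only [h, if_true]
    have e : ∑ p, chi m p * chi j.1 p = if m = j.1 then (4 : ℂ) ^ k else 0 := by
      rw [← chi_orth m j.1]
      exact Finset.sum_congr rfl fun p _ => by rw [chi_comm m p, chi_comm j.1 p]
    rw [e]
    by_cases h' : j.1 = m
    · simp [h']
    · simp [h', Ne.symm h']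
  · simp [h]

lemma Gs_mp0 (i j : BB k × Q) : Gs (mp0 (k := k) (Q := Q)) i j =
    if i = j then AddMonoidAlgebra.single (em i.1) 1 else 0 := by
  simp only [Gs, Matrix.of_apply, cf_mp0, diagonal_apply]
  by_cases h : i = j
  · simp only [h, if_true, ite_smul, one_smul, zero_smul, Finset.sum_ite_eq, Finset.mem_univ]
  · simp [h]

lemma Fs_zero {J : Type} [Fintype J] [DecidableEq J] : Fs (0 : I2 k → Matrix J J ℂ) = 0 := by
  ext i j; simp [Fs]

lemma D0_apply (M : ℕ) [NeZero M] (i j : BB k × Q) (x y : X k M) :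
    Dm M (Fs 0) (Gs (mp0 (k := k) (Q := Q))) (i, x) (j, y) =
      if i = j then Wm M (em i.1) (-x) y else 0 := by
  simp only [Dm, Fs_zero, Matrix.add_apply, OpM, Matrix.of_apply, Matrix.submatrix_apply, Gs_mp0,
    Matrix.zero_apply, map_zero, zero_add, id]
  split_ifs
  · rw [Op, lin_single, one_smul]
  · simp

lemma PW_sq (M : ℕ) [NeZero M] (m : I2 k → ℤ) (x z : X k M) :
    ∑ y, Wm M m (-x) y * Wm M m (-y) z = if x = z then 1 else 0 := by
  have : ∀ y, Wm M m (-y) z = Wm M (-m) y (-z) := fun y => by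
    rw [← Wm_neg_neg M m y (-z), neg_neg]
  simp only [this]
  rw [← Matrix.mul_apply, Wm_mul]
  have : dotz m (-m) - dotz (-m) m = 0 := by simp [dotz]
  rw [this, zt_zero, one_smul, add_neg_cancel, Wm_zero, Matrix.one_apply]
  simp

lemma D0_sq (M : ℕ) [NeZero M] :
    Dm M (Fs 0) (Gs (mp0 (k := k) (Q := Q))) * Dm M (Fs 0) (Gs (mp0 (k := k) (Q := Q))) = 1 := by
  ext ⟨i, x⟩ ⟨j, z⟩
  rw [Matrix.mul_apply, Fintype.sum_prod_type]
  simp only [D0_apply, Matrix.one_apply, Prod.mk.injEq]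
  by_cases h : i = j
  · subst h
    rw [Finset.sum_eq_single i]
    · simp [PW_sq]
    · intro b _ hb; simp [hb, Ne.symm hb]
    · simp
  · rw [if_neg (by tauto)]
    refine Finset.sum_eq_zero fun b _ => Finset.sum_eq_zero fun y _ => ?_
    by_cases h1 : i = b
    · subst h1; simp [h]
    · simp [h1]

lemma mp0_herm (p : BB k) : (mp0 p : Matrix (BB k × Q) (BB k × Q) ℂ)ᴴ = mp0 p := by
  rw [mp0, diagonal_conjTranspose]; congr 1; ext j; exact chi_star _ _

lemma even_ne (M : ℕ) (hM : 2 ∣ M) (x : ZMod M) : x + x ≠ 1 := by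
  intro h
  have := congrArg (ZMod.castHom hM (ZMod 2)) h
  rw [map_add, map_one] at this
  generalize (ZMod.castHom hM (ZMod 2)) x = y at this
  revert this; revert y; decide

lemma achar_sum (M : ℕ) [NeZero M] {ι : Type} (s : Finset ι) (f : ι → ZMod M) :
    (ZMod.stdAddChar (∑ j ∈ s, f j) : ℂ) = ∏ j ∈ s, (ZMod.stdAddChar (f j) : ℂ) := by
  classical
  induction s using Finset.induction_on with
  | empty => simp
  | insert a s ha ih => rw [Finset.sum_insert ha, Finset.prod_insert ha, AddChar.map_add_eq_mul, ih]

lemma PW_trace (M : ℕ) [NeZero M] (hM : 2 ∣ M) :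
    ∑ b : BB k, ∑ x : X k M, Wm M (em b) (-x) x = 2 ^ k := by
  have e1 : ∀ (b : BB k) (x : X k M), Wm M (em b) (-x) x =
      if (∀ j, b (Sum.inl j) = false) ∧ (∀ j, x j + x j = 0) then
        ∏ j, (if b (Sum.inr j) then (ZMod.stdAddChar (- x j) : ℂ) else 1) else 0 := by
    intro b x
    rw [Wm, Matrix.of_apply]
    have hiff : (x = -x + sh M (em b)) ↔ 
        ((∀ j, b (Sum.inl j) = false) ∧ (∀ j, x j + x j = 0)) := by
      constructor
      · intro h
        have h' : ∀ j, x j + x j = if b (Sum.inl j) then 1 else 0 := by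
          intro j
          have := congrFun h j
          simp only [Pi.add_apply, Pi.neg_apply, sh, em] at this
          have h2 : x j + x j = x j - (- x j) := by ring
          rw [h2]; nth_rewrite 1 [this]
          split_ifs <;> simp
        have h0 : ∀ j, b (Sum.inl j) = false := by
          intro j
          by_contra hb
          have := h' j
          simp only [Bool.not_eq_false] at hb
          rw [hb, if_pos rfl] at this
          exact even_ne M hM _ this
        exact ⟨h0, fun j => by simpa [h0 j] using h' j⟩
      · rintro ⟨h1, h2⟩
        ext j
        simp [sh, em, h1 j]
        exact eq_neg_of_add_eq_zero_left (h2 j)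
    simp only [hiff]
    split_ifs with h
    · have : dotz (em b) (em b) = 0 := by simp [dotz, em, h.1]
      rw [this, zt_zero, one_mul, ch, achar_sum]
      refine Finset.prod_congr rfl fun j _ => ?_
      by_cases hb : b (Sum.inr j) <;> simp [em, hb]
    · rfl
  simp only [e1]
  rw [Finset.sum_comm, Finset.sum_eq_single (0 : X k M)]
  · rw [← (Equiv.sumArrowEquivProdArrow (Fin k) (Fin k) Bool).symm.sum_comp, Fintype.sum_prod_type,
      Finset.sum_eq_single (fun _ => false)]
    · simp
    · intro c _ hc
      have : ¬ ∀ j, c j = false := fun h => hc (funext h)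
      simp [Equiv.sumArrowEquivProdArrow, this]
    · simp
  · intro x _ hx
    by_cases h2 : ∀ j, x j + x j = 0
    · simp only [h2]
      rw [← (Equiv.sumArrowEquivProdArrow (Fin k) (Fin k) Bool).symm.sum_comp,
        Fintype.sum_prod_type]
      refine Finset.sum_eq_zero fun c _ => ?_
      simp only [Equiv.sumArrowEquivProdArrow, Equiv.coe_fn_symm_mk, Sum.elim_inl, Sum.elim_inr]
      by_cases hc : ∀ j, c j = false
      · simp only [hc, implies_true, and_true, if_true]
        have := Finset.prod_univ_sum (fun _ : Fin k => (Finset.univ : Finset Bool))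
          (fun j s => if s then (ZMod.stdAddChar (- x j) : ℂ) else 1)
        rw [Fintype.piFinset_univ] at this
        refine Eq.trans ?_ (this.symm.trans ?_)
        · refine Finset.sum_congr rfl fun d _ => Finset.prod_congr rfl fun j _ => ?_
          congr
        obtain ⟨j, hj⟩ := Function.ne_iff.mp hx
        refine Finset.prod_eq_zero (Finset.mem_univ j) ?_
        have hs : (ZMod.stdAddChar (- x j) : ℂ) * ZMod.stdAddChar (- x j) = 1 := by
          rw [← AddChar.map_add_eq_mul, ← neg_add, h2 j, neg_zero, AddChar.map_zero_eq_one]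
        have hne : (ZMod.stdAddChar (- x j) : ℂ) ≠ 1 := by
          intro h
          rw [← AddChar.map_zero_eq_one (ZMod.stdAddChar (N := M))] at h
          have := ZMod.injective_stdAddChar h
          exact hj (neg_eq_zero.mp this)
        rcases mul_self_eq_one_iff.mp hs with h | h
        · exact absurd h hne
        · simp [h]
      · simp [hc]
    · simp [h2]
  · simp

lemma npos_D0 (M : ℕ) [NeZero M] (hM : 2 ∣ M) :
    2 * npos (Dm M (Fs 0) (Gs (mp0 (k := k) (Q := Q)))) =
      4 ^ k * Fintype.card Q * M ^ k + Fintype.card Q * 2 ^ k := by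
  have h := npos_invol (Dm M (Fs 0) (Gs (mp0 (k := k) (Q := Q))))
    (Dm_herm M 0 mp0 (by simp) mp0_herm) (D0_sq M)
  have ht : (Dm M (Fs 0) (Gs (mp0 (k := k) (Q := Q)))).trace = Fintype.card Q * 2 ^ k := by
    rw [Matrix.trace, Fintype.sum_prod_type]
    simp only [Matrix.diag_apply, D0_apply, if_true]
    rw [Fintype.sum_prod_type, Finset.sum_comm]
    simp only [PW_trace M hM]
    simp
  have hcard : Fintype.card ((BB k × Q) × X k M) = 4 ^ k * Fintype.card Q * M ^ k := by
    simp [← two_mul, pow_mul]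
  rw [ht, hcard] at h
  exact_mod_cast h

end HR
/-! Part 8 -/
namespace HR
set_option linter.unusedSectionVars false
open UnitAddTorus Filter Topology
open scoped Kronecker

section
variable {k : ℕ} {J : Type} [Fintype J] [DecidableEq J]

lemma stage_inv (a : I2 k → Matrix J J ℂ) (mp mp' : BB k → Matrix J J ℂ) (ha : ∀ l, (a l)ᴴ = a l)
    (hm : ∀ p, (mp p)ᴴ = mp p) (hm' : ∀ p, (mp' p)ᴴ = mp' p)
    (hc : ∀ l p, a l * mp p = mp p * a l) (hc' : ∀ l p, a l * mp' p = mp' p * a l)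
    (hd : ∀ c : I2 k → ℝ, c ≠ 0 → (∑ l, (c l : ℂ) • a l).det ≠ 0)
    (hp : ∀ p, (mp p = 1 ∧ mp' p = 1) ∨ (mp p * mp p = 1 ∧ mp' p * mp' p = 1 ∧
      mp p * mp' p + mp' p * mp p = 0)) :
    ∀ᶠ M in atTop, ∀ [NeZero M], npos (Dm M (Fs a) (Gs mp)) =
      npos (Dm M (Fs a) (Gs mp')) := by
  have h := stage a 0 mp (mp' - mp) ha hm (by simp) (fun p => by
    rw [Pi.sub_apply, conjTranspose_sub, hm, hm']) ?_
  · simpa using h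
  · intro t ht z
    rw [smul_zero, add_zero]
    refine symb_ne' a _ ha ?_ ?_ hd ?_ z
    · intro p
      simp only [Pi.add_apply, Pi.smul_apply, Pi.sub_apply, conjTranspose_add, conjTranspose_smul,
        conjTranspose_sub, hm, hm']
      simp
    · intro l p
      simp only [Pi.add_apply, Pi.smul_apply, Pi.sub_apply, mul_add, add_mul, mul_sub, sub_mul,
        Matrix.mul_smul, Matrix.smul_mul, hc, hc']
    · intro p
      simp only [Pi.add_apply, Pi.smul_apply, Pi.sub_apply]
      rcases hp p with ⟨h1, h2⟩ | ⟨h1, h2, h3⟩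
      · simp [h1, h2]
      · have hsq : (mp p + (t:ℂ) • (mp' p - mp p)) * (mp p + (t:ℂ) • (mp' p - mp p)) =
            (((1 - t) ^ 2 + t ^ 2 : ℝ) : ℂ) • 1 := by
          have h3' : mp' p * mp p = - (mp p * mp' p) := by
            rw [eq_neg_iff_add_eq_zero, add_comm]; exact h3
          simp only [mul_add, add_mul, mul_sub, sub_mul, Matrix.mul_smul, Matrix.smul_mul, h1, h2,
            h3']
          push_cast
          module
        intro h0
        have := congrArg Matrix.det hsq
        rw [det_mul, h0, zero_mul, det_smul, det_one, mul_one] at this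
        have hpos : (0:ℝ) < (1 - t) ^ 2 + t ^ 2 := by nlinarith [sq_nonneg (1 - 2 * t)]
        have hne : (((1 - t) ^ 2 + t ^ 2 : ℝ) : ℂ) ≠ 0 := by exact_mod_cast hpos.ne'
        exact pow_ne_zero _ hne this.symm

lemma Fs_kron {B : Type} [Fintype B] [DecidableEq B] (a : I2 k → Matrix J J ℂ) (i j : B × J) :
    Fs (fun l => (1 : Matrix B B ℂ) ⊗ₖ a l) i j = if i.1 = j.1 then Fs a i.2 j.2 else 0 := by
  simp only [Fs, Matrix.of_apply, kroneckerMap_apply, Matrix.one_apply]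
  split_ifs <;> simp

lemma cf_kron {B : Type} [Fintype B] [DecidableEq B] (mp : BB k → Matrix J J ℂ) (m : BB k)
    (i j : B × J) :
    cf (fun p => (1 : Matrix B B ℂ) ⊗ₖ mp p) m i j = if i.1 = j.1 then cf mp m i.2 j.2 else 0 := by
  simp only [cf, Matrix.smul_apply, Matrix.sum_apply, kroneckerMap_apply, Matrix.one_apply]
  split_ifs <;> simp

lemma Gs_kron {B : Type} [Fintype B] [DecidableEq B] (mp : BB k → Matrix J J ℂ) (i j : B × J) :
    Gs (fun l => (1 : Matrix B B ℂ) ⊗ₖ mp l) i j = if i.1 = j.1 then Gs mp i.2 j.2 else 0 := by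
  simp only [Gs, Matrix.of_apply, cf_kron]
  split_ifs <;> simp

lemma Dm_kron {B : Type} [Fintype B] [DecidableEq B] (M : ℕ) [NeZero M]
    (a : I2 k → Matrix J J ℂ) (mp : BB k → Matrix J J ℂ) :
    Dm M (Fs fun l => (1 : Matrix B B ℂ) ⊗ₖ a l) (Gs fun p => (1 : Matrix B B ℂ) ⊗ₖ mp p) =
      Matrix.reindex (Equiv.prodAssoc B J (X k M)).symm (Equiv.prodAssoc B J (X k M)).symm
        ((1 : Matrix B B ℂ) ⊗ₖ Dm M (Fs a) (Gs mp)) := by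
  ext ⟨⟨b, i⟩, x⟩ ⟨⟨c, j⟩, y⟩
  simp only [Dm, Matrix.add_apply, OpM, Matrix.of_apply, Matrix.submatrix_apply, Gs_kron, Fs_kron,
    Matrix.reindex_apply, kroneckerMap_apply, Matrix.one_apply, id, Equiv.symm_symm,
    Equiv.prodAssoc_apply]
  split_ifs <;> simp

lemma npos_dvd {B : Type} [Fintype B] [DecidableEq B] (M : ℕ) [NeZero M]
    (a : I2 k → Matrix J J ℂ) (mp : BB k → Matrix J J ℂ) :
    Fintype.card B ∣
      npos (Dm M (Fs fun l => (1 : Matrix B B ℂ) ⊗ₖ a l) (Gs fun p => (1 : Matrix B B ℂ) ⊗ₖ mp p)) := by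
  rw [Dm_kron, npos_reindex, npos_kron]
  exact dvd_mul_right _ _

/-- bit flip -/
def fl (i : I2 k) (x : BB k) : BB k := Function.update x i (!x i)

lemma fl_fl (i : I2 k) (x : BB k) : fl i (fl i x) = x := by
  ext j; by_cases h : j = i
  · subst h; simp [fl]
  · simp [fl, h]

lemma chi_fl (i : I2 k) (x p : BB k) (hp : p i = true) : chi (fl i x) p = - chi x p := by
  rw [chi, chi, ← Finset.mul_prod_erase _ _ (Finset.mem_univ i),
    ← Finset.mul_prod_erase (a := i) _ (fun j => if x j && p j then (-1:ℂ) else 1) (Finset.mem_univ i),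
    ← neg_mul]
  congr 1
  · cases h : x i <;> simp [fl, hp, h]
  · refine Finset.prod_congr rfl fun j hj => ?_
    have := Finset.ne_of_mem_erase hj
    simp [fl, this]

def Xf (i : I2 k) : Matrix (BB k) (BB k) ℂ := Matrix.of fun x y => if y = fl i x then 1 else 0

lemma Xf_herm (i : I2 k) : (Xf i)ᴴ = Xf i := by
  ext x y
  simp only [Matrix.conjTranspose_apply, Xf, Matrix.of_apply]
  have : x = fl i y ↔ y = fl i x := by
    constructor <;> (intro h; rw [h, fl_fl])
  simp only [this]
  split_ifs <;> simp

lemma Xf_sq (i : I2 k) : Xf i * Xf i = 1 := by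
  ext x y
  rw [Matrix.mul_apply]
  simp only [Xf, Matrix.of_apply, ite_mul, one_mul, zero_mul, Finset.sum_ite_eq', Finset.mem_univ, if_true, fl_fl,
    Matrix.one_apply, eq_comm]

lemma Xf_anti (i : I2 k) (p : BB k) (hp : p i = true) :
    diagonal (fun b => chi b p) * Xf i + Xf i * diagonal (fun b => chi b p) = 0 := by
  ext x y
  rw [Matrix.add_apply, Matrix.diagonal_mul, Matrix.mul_diagonal]
  simp only [Xf, Matrix.of_apply, Matrix.zero_apply]
  split_ifs with h
  · rw [h, chi_fl i x p hp]; ring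
  · simp

end

def sx : Matrix (Fin 2) (Fin 2) ℂ := !![0, 1; 1, 0]
def sz : Matrix (Fin 2) (Fin 2) ℂ := !![1, 0; 0, -1]
lemma sx_herm : sxᴴ = sx := by ext i j; fin_cases i <;> fin_cases j <;> simp [sx]
lemma sz_herm : szᴴ = sz := by ext i j; fin_cases i <;> fin_cases j <;> simp [sz]
lemma sx_sq : sx * sx = 1 := by ext i j; fin_cases i <;> fin_cases j <;> simp [sx]
lemma sz_sq : sz * sz = 1 := by ext i j; fin_cases i <;> fin_cases j <;> simp [sz]
lemma szx : sz * sx = - (sx * sz) := by ext i j; fin_cases i <;> fin_cases j <;> simp [sx, sz]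

variable {k N : ℕ}

lemma mp0_kron (p : BB k) : (mp0 p : Matrix (BB k × (Fin N × Fin 2)) _ ℂ) =
    (diagonal fun b => chi b p) ⊗ₖ (1 : Matrix (Fin N × Fin 2) (Fin N × Fin 2) ℂ) := by
  rw [mp0, ← diagonal_one, diagonal_kronecker_diagonal]
  simp

open Classical in
noncomputable def mp1 (p : BB k) : Matrix (BB k × (Fin N × Fin 2)) (BB k × (Fin N × Fin 2)) ℂ :=
  if h : ∃ i, p i = true then Xf h.choose ⊗ₖ ((1 : Matrix (Fin N) (Fin N) ℂ) ⊗ₖ sz) else 1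

open Classical in
noncomputable def mp2 (p : BB k) : Matrix (Fin N × Fin 2) (Fin N × Fin 2) ℂ :=
  if ∃ i, p i = true then (1 : Matrix (Fin N) (Fin N) ℂ) ⊗ₖ sx else 1

lemma mp0_one (p : BB k) (h : ¬ ∃ i, p i = true) :
    (mp0 p : Matrix (BB k × (Fin N × Fin 2)) _ ℂ) = 1 := by
  rw [mp0, ← diagonal_one]
  congr 1
  ext j
  push Not at h
  simp [chi, h]

theorem main_dvd (A : I2 k → Matrix (Fin N) (Fin N) ℂ) (hA : ∀ l, (A l)ᴴ = A l)
    (hd : ∀ c : I2 k → ℝ, c ≠ 0 → (∑ l, (c l : ℂ) • A l).det ≠ 0) : 2 ^ k ∣ N := by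
  set a' : I2 k → Matrix (Fin N × Fin 2) (Fin N × Fin 2) ℂ := fun l => A l ⊗ₖ 1 with ha'
  set a : I2 k → Matrix (BB k × (Fin N × Fin 2)) (BB k × (Fin N × Fin 2)) ℂ :=
    fun l => 1 ⊗ₖ a' l with ha
  have hah : ∀ l, (a l)ᴴ = a l := by
    intro l; simp [ha, ha', conjTranspose_kronecker, hA]
  have had : ∀ c : I2 k → ℝ, c ≠ 0 → (∑ l, (c l : ℂ) • a l).det ≠ 0 := by
    intro c hc
    have : ∑ l, (c l : ℂ) • a l = 1 ⊗ₖ ((∑ l, (c l : ℂ) • A l) ⊗ₖ 1) := by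
      ext i j
      simp only [ha, ha', Matrix.sum_apply, kroneckerMap_apply, Finset.mul_sum, Finset.sum_mul,
        Matrix.smul_apply, smul_eq_mul]
      refine Finset.sum_congr rfl fun l _ => ?_
      ring
    rw [this, det_kronecker, det_kronecker, det_one, det_one, one_pow, one_pow, one_mul, mul_one]
    exact pow_ne_zero _ (pow_ne_zero _ (hd c hc))
  have c0 : ∀ l p, a l * mp0 p = mp0 p * a l := by
    intro l p
    rw [mp0_kron, ha, ← mul_kronecker_mul, ← mul_kronecker_mul]; simp
  have c1 : ∀ l p, a l * mp1 p = mp1 p * a l := by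
    intro l p
    rw [mp1]
    split_ifs
    · simp only [ha, ha', ← mul_kronecker_mul]; simp
    · simp
  have c2 : ∀ (l : I2 k) (p : BB k), a l * ((1 : Matrix (BB k) (BB k) ℂ) ⊗ₖ (mp2 p : Matrix (Fin N × Fin 2) (Fin N × Fin 2) ℂ)) =
      ((1 : Matrix (BB k) (BB k) ℂ) ⊗ₖ (mp2 p : Matrix (Fin N × Fin 2) (Fin N × Fin 2) ℂ)) * a l := by
    intro l p
    rw [mp2]
    split_ifs
    · simp only [ha, ha', ← mul_kronecker_mul]; simp
    · simp
  have h1 : ∀ p : BB k, (mp1 p : Matrix (BB k × (Fin N × Fin 2)) _ ℂ)ᴴ = mp1 p := by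
    intro p
    rw [mp1]
    split_ifs
    · simp [conjTranspose_kronecker, Xf_herm, sz_herm]
    · simp
  have h2 : ∀ p : BB k, ((1 : Matrix (BB k) (BB k) ℂ) ⊗ₖ (mp2 p : Matrix (Fin N × Fin 2) _ ℂ))ᴴ =
      1 ⊗ₖ mp2 p := by
    intro p
    rw [mp2]
    split_ifs
    · simp [conjTranspose_kronecker, sx_herm]
    · simp
  have s0 := stage (0 : I2 k → Matrix (BB k × (Fin N × Fin 2)) (BB k × (Fin N × Fin 2)) ℂ) a mp0 0
    (by simp) mp0_herm hah (by simp) (by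
      intro t ht z
      rw [smul_zero, add_zero, zero_add]
      refine symb_ne _ mp0 ?_ mp0_herm ?_ z (Or.inr ?_)
      · intro l; rw [Pi.smul_apply, conjTranspose_smul, hah]; simp
      · intro l p; rw [Pi.smul_apply, smul_mul_assoc, mul_smul_comm, c0]
      · have : ∑ m, mFourier (em m) z • cf (mp0 (k := k) (Q := Fin N × Fin 2)) m =
            diagonal fun j => mFourier (em j.1) z := by
          ext i j
          simp only [cf_mp0, Matrix.sum_apply, Matrix.smul_apply, diagonal_apply]
          by_cases h : i = j
          · simp [h]
          · simp [h]
        rw [this, det_diagonal, Finset.prod_ne_zero_iff]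
        intro j _ h0
        have := mF_em z j.1
        rw [h0] at this
        have hh := congrArg norm this
        rw [norm_zero, norm_prod] at hh
        revert hh
        rw [eq_comm, Finset.prod_eq_zero_iff]
        rintro ⟨l, _, hl⟩
        revert hl
        split_ifs
        · rw [wz_norm]; simp
        · simp)
  have s1 := stage_inv a mp0 mp1 hah mp0_herm h1 c0 c1 had (by
    intro p
    by_cases h : ∃ i, p i = true
    · right
      rw [mp0_kron, mp1, dif_pos h, ← mul_kronecker_mul, ← mul_kronecker_mul,
        ← mul_kronecker_mul, ← mul_kronecker_mul, ← mul_kronecker_mul, Xf_sq, sz_sq]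
      refine ⟨?_, by simp, ?_⟩
      · rw [diagonal_mul_diagonal]
        simp [chi_sq]
      · rw [one_mul, mul_one, ← add_kronecker, Xf_anti _ p h.choose_spec]
        simp
    · left
      exact ⟨mp0_one p h, by rw [mp1, dif_neg h]⟩)
  have s2 := stage_inv a mp1 (fun p => 1 ⊗ₖ mp2 p) hah h1 h2 c1 c2 had (by
    intro p
    by_cases h : ∃ i, p i = true
    · right
      rw [mp2, mp1, dif_pos h, if_pos h]
      simp only [← mul_kronecker_mul, Xf_sq, sz_sq, sx_sq, mul_one, one_mul, szx]
      refine ⟨by simp, by simp, ?_⟩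
      rw [← kronecker_add, ← kronecker_add]
      simp
    · left
      exact ⟨by rw [mp1, dif_neg h], by rw [mp2, if_neg h]; simp⟩)
  obtain ⟨L, hL⟩ := eventually_atTop.mp (s0.and (s1.and s2))
  obtain ⟨e0, e1, e2⟩ := hL (2 * (L + 1)) (by omega)
  have : NeZero (2 * (L + 1)) := ⟨by omega⟩
  have e0 := e0
  rw [zero_add, add_zero] at e0
  have hf := npos_D0 (k := k) (Q := Fin N × Fin 2) (2 * (L + 1)) ⟨L + 1, rfl⟩
  rw [e0, e1, e2] at hf
  obtain ⟨r, hr⟩ := npos_dvd (B := BB k) (2 * (L + 1)) a' (mp2 (k := k) (N := N))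
  rw [hr] at hf
  have hB : Fintype.card (BB k) = 4 ^ k := by simp [← two_mul, pow_mul]
  have hQ : Fintype.card (Fin N × Fin 2) = N * 2 := by simp
  rw [hB, hQ] at hf
  have h4 : (4:ℕ) ^ k = 2 ^ k * 2 ^ k := by rw [← mul_pow]; norm_num
  have hdv : 4 ^ k ∣ N * 2 ^ k := by
    have h5 : 4 ^ k * r = 4 ^ k * (N * (2 * (L + 1)) ^ k) + N * 2 ^ k := by
      have : 2 * (4 ^ k * r) = 2 * (4 ^ k * (N * (2 * (L + 1)) ^ k) + N * 2 ^ k) := by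
        rw [hf]; ring
      omega
    exact (Nat.dvd_add_right (dvd_mul_right _ _)).mp (h5 ▸ dvd_mul_right _ _)
  rw [h4] at hdv
  exact Nat.dvd_of_mul_dvd_mul_right (by positivity) hdv

end HR
/-! Part 9 -/
namespace HR
set_option linter.unusedSectionVars false
open scoped Kronecker

def Cl (I ι : Type) [Fintype ι] [DecidableEq ι] : Prop :=
  ∃ γ : I → Matrix ι ι ℂ, (∀ i, (γ i)ᴴ = γ i) ∧ (∀ i, γ i * γ i = 1) ∧
    ∀ i j, i ≠ j → γ i * γ j + γ j * γ i = 0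

lemma Cl_mono {I I' ι : Type} [Fintype ι] [DecidableEq ι] (e : I' ↪ I) (h : Cl I ι) : Cl I' ι := by
  obtain ⟨γ, h1, h2, h3⟩ := h
  exact ⟨fun i => γ (e i), fun i => h1 _, fun i => h2 _, fun i j hij =>
    h3 _ _ (fun h => hij (e.injective h))⟩

lemma Cl_reindex {I ι ι' : Type} [Fintype ι] [DecidableEq ι] [Fintype ι'] [DecidableEq ι']
    (e : ι ≃ ι') (h : Cl I ι) : Cl I ι' := by
  obtain ⟨γ, h1, h2, h3⟩ := h
  refine ⟨fun i => Matrix.reindex e e (γ i), fun i => ?_, fun i => ?_, fun i j hij => ?_⟩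
  · rw [Matrix.conjTranspose_reindex, h1]
  · simp only [Matrix.reindex_apply, Matrix.submatrix_mul_equiv, h2, Matrix.submatrix_one_equiv]
  · simp only [Matrix.reindex_apply, Matrix.submatrix_mul_equiv, ← Matrix.submatrix_add, Pi.add_apply]
    have := h3 i j hij
    ext a b
    simpa using congrFun (congrFun this (e.symm a)) (e.symm b)

def sy : Matrix (Fin 2) (Fin 2) ℂ := !![0, -Complex.I; Complex.I, 0]
lemma sy_herm : syᴴ = sy := by ext i j; fin_cases i <;> fin_cases j <;> simp [sy]
lemma sy_sq : sy * sy = 1 := by ext i j; fin_cases i <;> fin_cases j <;> simp [sy]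
lemma szy : sz * sy = - (sy * sz) := by ext i j; fin_cases i <;> fin_cases j <;> simp [sy, sz]
lemma sxy : sx * sy = - (sy * sx) := by ext i j; fin_cases i <;> fin_cases j <;> simp [sx, sy]

lemma Cl_step {I ι : Type} [Fintype ι] [DecidableEq ι] (h : Cl I ι) :
    Cl (Option (Option I)) (ι × Fin 2) := by
  obtain ⟨γ, h1, h2, h3⟩ := h
  refine ⟨fun o => match o with
    | none => (1 : Matrix ι ι ℂ) ⊗ₖ sy
    | some none => (1 : Matrix ι ι ℂ) ⊗ₖ sz
    | some (some i) => γ i ⊗ₖ sx, ?_, ?_, ?_⟩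
  · rintro (_ | _ | i) <;> simp [conjTranspose_kronecker, sy_herm, sz_herm, sx_herm, h1]
  · rintro (_ | _ | i) <;> simp [← mul_kronecker_mul, sx_sq, sy_sq, sz_sq, h2]
  · rintro (_ | _ | i) (_ | _ | j) hij
    · exact absurd rfl hij
    · simp only [← mul_kronecker_mul, szy, ← kronecker_add]; simp
    · simp only [← mul_kronecker_mul, sxy, one_mul, mul_one, ← kronecker_add]; simp
    · simp only [← mul_kronecker_mul, szy, ← kronecker_add]; simp
    · exact absurd rfl hij
    · simp only [← mul_kronecker_mul, szx, one_mul, mul_one, ← kronecker_add]; simp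
    · simp only [← mul_kronecker_mul, sxy, one_mul, mul_one, ← kronecker_add]; simp
    · simp only [← mul_kronecker_mul, szx, one_mul, mul_one, ← kronecker_add]; simp
    · simp only [← mul_kronecker_mul, sx_sq, ← add_kronecker]
      rw [h3 i j (fun h => hij (by rw [h]))]; simp

lemma Cl_exists (q b : ℕ) : Cl (Fin (2 * b + 1)) (Fin (2 ^ b * q)) := by
  induction b with
  | zero =>
    refine ⟨fun _ => 1, by simp, by simp, fun i j h => absurd (Subsingleton.elim (α := Fin 1) i j) h⟩
  | succ b ih =>
    have h := Cl_step ih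
    have e : Fin (2 * (b + 1) + 1) ≃ Option (Option (Fin (2 * b + 1))) :=
      Fintype.equivOfCardEq (by simp; ring)
    have e' : Fin (2 ^ b * q) × Fin 2 ≃ Fin (2 ^ (b + 1) * q) :=
      Fintype.equivOfCardEq (by simp; ring)
    exact Cl_reindex e' (Cl_mono e.toEmbedding h)

lemma Cl_map {n N : ℕ} (h : Cl (Fin n) (Fin N)) :
    ∃ f : EuclideanSpace ℝ (Fin n) →ₗ[ℝ] Matrix (Fin N) (Fin N) ℂ,
        ∀ v, (f v)ᴴ = f v ∧
          (f v) ^ 2 = (‖v‖ ^ 2 : ℝ) • (1 : Matrix (Fin N) (Fin N) ℂ) := by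
  obtain ⟨γ, h1, h2, h3⟩ := h
  refine ⟨{ toFun := fun v => ∑ i, v i • γ i, map_add' := ?_, map_smul' := ?_ }, ?_⟩
  · intro v w
    simp [add_smul, Finset.sum_add_distrib]
  · intro c v
    simp [mul_smul, Finset.smul_sum]
  · intro v
    simp only [LinearMap.coe_mk, AddHom.coe_mk]
    constructor
    · rw [conjTranspose_sum]
      refine Finset.sum_congr rfl fun i _ => ?_
      rw [conjTranspose_smul, h1]; simp
    · have e1 : (∑ i, v i • γ i) ^ 2 = ∑ i, ∑ j, (v i * v j) • (γ i * γ j) := by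
        rw [sq, Finset.sum_mul_sum]
        simp only [smul_mul_smul_comm]
      have e2 : (∑ i, v i • γ i) ^ 2 = ∑ i, ∑ j, (v i * v j) • (γ j * γ i) := by
        rw [e1, Finset.sum_comm]
        simp only [mul_comm]
      have e3 : (2:ℝ) • (∑ i, v i • γ i) ^ 2 = (2:ℝ) • ((‖v‖ ^ 2 : ℝ) • (1 : Matrix (Fin N) (Fin N) ℂ)) := by
        rw [two_smul]
        nth_rewrite 1 [e1]
        rw [e2]
        simp only [← Finset.sum_add_distrib, ← smul_add]
        have : ∀ i, ∑ j, (v i * v j) • (γ i * γ j + γ j * γ i) =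
            (2:ℝ) • ((v i) ^ 2 • (1 : Matrix (Fin N) (Fin N) ℂ)) := by
          intro i
          rw [Finset.sum_eq_single i]
          · rw [h2, ← two_smul ℝ (1 : Matrix (Fin N) (Fin N) ℂ), smul_comm, sq]
          · intro j _ hj; rw [h3 i j hj.symm, smul_zero]
          · simp
        simp only [this]
        rw [← Finset.smul_sum, ← Finset.sum_smul, EuclideanSpace.norm_sq_eq]
        simp
      exact smul_right_injective _ (two_ne_zero (α := ℝ)) e3

lemma upper {n N : ℕ} (hN : 1 ≤ N) (f : EuclideanSpace ℝ (Fin n) →ₗ[ℝ] Matrix (Fin N) (Fin N) ℂ)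
    (h1 : ∀ v, (f v)ᴴ = f v) (h2 : ∀ v, v ≠ 0 → IsUnit (f v)) : n ≤ 2 * padicValNat 2 N + 1 := by
  by_contra hn
  set k := padicValNat 2 N + 1 with hk
  have e : I2 k ↪ Fin n := by
    refine (Function.Embedding.nonempty_of_card_le ?_).some
    simp; omega
  have hdv : 2 ^ k ∣ N := by
    refine main_dvd (fun l => f (EuclideanSpace.single (e l) (1:ℝ))) (fun l => h1 _) ?_
    intro c hc
    have hs : ∑ l, (c l : ℂ) • f (EuclideanSpace.single (e l) (1:ℝ)) =
        f (∑ l, c l • EuclideanSpace.single (e l) (1:ℝ)) := by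
      rw [map_sum]
      refine Finset.sum_congr rfl fun l _ => ?_
      rw [map_smul]; ext i j; simp
    rw [hs]
    have hv : ∑ l, c l • EuclideanSpace.single (e l) (1:ℝ) ≠ 0 := by
      intro h0
      obtain ⟨l, hl⟩ := Function.ne_iff.mp hc
      apply hl
      have := congrArg (fun v : EuclideanSpace ℝ (Fin n) => v (e l)) h0
      simp only [WithLp.ofLp_sum, Finset.sum_apply, WithLp.ofLp_smul, Pi.smul_apply,
        EuclideanSpace.single_apply, smul_eq_mul, e.injective.eq_iff] at this
      rw [Finset.sum_eq_single l (by intro b _ hb; simp [Ne.symm hb]) (by simp)] at this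
      simpa using this
    exact ((Matrix.isUnit_iff_isUnit_det _).mp (h2 _ hv)).ne_zero
  have := (padicValNat_dvd_iff_le (p := 2) (by omega)).mp hdv
  omega

end HR


/-- Entry `𝔤 = 𝔤𝔩(N,ℂ)` of the Hurwitz–Radon value theorem:
`ρ⁽¹⁾ = ρ⁽²⁾ = 2·ord₂(N) + 1`. -/
theorem hurwitzRadon_gl_N_C (N : ℕ) (hN : 1 ≤ N) (n : ℕ) :
    ((∃ f : EuclideanSpace ℝ (Fin n) →ₗ[ℝ] Matrix (Fin N) (Fin N) ℂ,
        ∀ v, (f v)ᴴ = f v ∧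
          (f v) ^ 2 = (‖v‖ ^ 2 : ℝ) • (1 : Matrix (Fin N) (Fin N) ℂ)) ↔
      (∃ f : EuclideanSpace ℝ (Fin n) →ₗ[ℝ] Matrix (Fin N) (Fin N) ℂ,
        (∀ v, (f v)ᴴ = f v) ∧ ∀ v, v ≠ 0 → IsUnit (f v))) ∧
    ((∃ f : EuclideanSpace ℝ (Fin n) →ₗ[ℝ] Matrix (Fin N) (Fin N) ℂ,
        (∀ v, (f v)ᴴ = f v) ∧ ∀ v, v ≠ 0 → IsUnit (f v)) ↔
      n ≤ 2 * padicValNat 2 N + 1) := by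
  have h31 : n ≤ 2 * padicValNat 2 N + 1 →
      ∃ f : EuclideanSpace ℝ (Fin n) →ₗ[ℝ] Matrix (Fin N) (Fin N) ℂ,
        ∀ v, (f v)ᴴ = f v ∧
          (f v) ^ 2 = (‖v‖ ^ 2 : ℝ) • (1 : Matrix (Fin N) (Fin N) ℂ) := by
    intro hn
    obtain ⟨q, hq⟩ := pow_padicValNat_dvd (p := 2) (n := N)
    have h := HR.Cl_exists q (padicValNat 2 N)
    rw [← hq] at h
    exact HR.Cl_map (HR.Cl_mono (Fin.castLEEmb hn) h)
  have h12 : (∃ f : EuclideanSpace ℝ (Fin n) →ₗ[ℝ] Matrix (Fin N) (Fin N) ℂ,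
        ∀ v, (f v)ᴴ = f v ∧
          (f v) ^ 2 = (‖v‖ ^ 2 : ℝ) • (1 : Matrix (Fin N) (Fin N) ℂ)) →
      (∃ f : EuclideanSpace ℝ (Fin n) →ₗ[ℝ] Matrix (Fin N) (Fin N) ℂ,
        (∀ v, (f v)ᴴ = f v) ∧ ∀ v, v ≠ 0 → IsUnit (f v)) := by
    rintro ⟨f, hf⟩
    refine ⟨f, fun v => (hf v).1, fun v hv => ?_⟩
    have hne : (‖v‖ ^ 2 : ℝ) ≠ 0 := pow_ne_zero _ (norm_ne_zero_iff.mpr hv)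
    refine (isUnit_pow_iff (two_ne_zero)).mp ?_
    rw [(hf v).2]
    exact (isUnit_one.smul (Units.mk0 _ hne))
  have h23 : (∃ f : EuclideanSpace ℝ (Fin n) →ₗ[ℝ] Matrix (Fin N) (Fin N) ℂ,
        (∀ v, (f v)ᴴ = f v) ∧ ∀ v, v ≠ 0 → IsUnit (f v)) → n ≤ 2 * padicValNat 2 N + 1 := by
    rintro ⟨f, h1, h2⟩
    exact HR.upper hN f h1 h2
  exact ⟨⟨h12, fun h => h31 (h23 h)⟩, ⟨h23, fun h => h12 (h31 h)⟩⟩
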